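/- arXiv:2211.00820 — 4 statements merged into one kernel-verified Lean document; each statement's English description precedes it below -/
import Mathlib

section
/- Let μ be a Borel probability measure on Ω absolutely continuous with respect to d-dimensional Lebesgue measure, let ν be a Borel probability measure on Ω, let u0 be a Kantorovich potential and T0 an optimal transport map for W1(μ,ν). Then for μ-almost every x ∈ Ω, either x = T0(x), or u0 is differentiable at x and −∇u0(x) = (T0(x) − x)/|T0(x) − x|. In particular, if μ({x ∈ Ω : x ≠ T0(x)}) > 0, then the conditional μ-probability, given x ≠ T0(x), of the event that u0 is differentiable at x with −∇u0(x) = (T0(x) − x)/|T0(x) − x| equals 1. -/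
open MeasureTheory Set

noncomputable section

/-- The Wasserstein 1 distance between two Borel probability measures, defined as the
infimum of the transport cost over all couplings. -/
def W1 {d : ℕ} (μ ν : Measure (EuclideanSpace ℝ (Fin d))) : ℝ :=
  sInf {c | ∃ γ : Measure (EuclideanSpace ℝ (Fin d) × EuclideanSpace ℝ (Fin d)),
    IsProbabilityMeasure γ ∧ γ.map Prod.fst = μ ∧ γ.map Prod.snd = ν ∧
    c = ∫ p, ‖p.1 - p.2‖ ∂γ}

/-- `u0` is a Kantorovich potential for `W1(μ, ν)`: it is 1-Lipschitz on Ω and achieves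
the supremum in the dual problem. -/
def IsKantorovichPotential {d : ℕ} (Ω : Set (EuclideanSpace ℝ (Fin d)))
    (μ ν : Measure (EuclideanSpace ℝ (Fin d))) (u0 : EuclideanSpace ℝ (Fin d) → ℝ) : Prop :=
  LipschitzOnWith 1 u0 Ω ∧
  ∀ u : EuclideanSpace ℝ (Fin d) → ℝ, LipschitzOnWith 1 u Ω →
    ∫ x, u x ∂μ - ∫ x, u x ∂ν ≤ ∫ x, u0 x ∂μ - ∫ x, u0 x ∂ν

/-- `T` is an optimal transport map for `W1(μ, ν)`: a Borel map from Ω to Ω pushing μ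
forward to ν whose transport cost equals `W1 μ ν`. -/
def IsOptimalMap {d : ℕ} (Ω : Set (EuclideanSpace ℝ (Fin d)))
    (μ ν : Measure (EuclideanSpace ℝ (Fin d)))
    (T : EuclideanSpace ℝ (Fin d) → EuclideanSpace ℝ (Fin d)) : Prop :=
  Measurable T ∧ MapsTo T Ω Ω ∧ μ.map T = ν ∧ ∫ x, ‖x - T x‖ ∂μ = W1 μ ν


theorem riesz_cpt {Y : Type*} [TopologicalSpace Y] [T2Space Y] [CompactSpace Y]
    [MeasurableSpace Y] [BorelSpace Y] (L : C(Y, ℝ) →ₗ[ℝ] ℝ)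
    (hL : ∀ f : C(Y, ℝ), 0 ≤ f → 0 ≤ L f) :
    ∃ γ : Measure Y, IsFiniteMeasure γ ∧ ∀ f : C(Y, ℝ), ∫ y, f y ∂γ = L f := by
  let Λ : CompactlySupportedContinuousMap Y ℝ →ₚ[ℝ] ℝ := PositiveLinearMap.mk₀
    { toFun := fun f => L f.toContinuousMap
      map_add' := fun f g => L.map_add _ _
      map_smul' := fun c f => L.map_smul _ _ } (fun f hf => hL _ hf)
  refine ⟨RealRMK.rieszMeasure Λ, ?_, fun f => ?_⟩
  · have : IsFiniteMeasureOnCompacts (RealRMK.rieszMeasure Λ) := by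
      infer_instance
    exact ⟨(isCompact_univ (X := Y)).measure_lt_top⟩
  · exact RealRMK.integral_rieszMeasure Λ
      (CompactlySupportedContinuousMap.continuousMapEquiv f)

theorem hb_point {E : Type*} [AddCommGroup E] [Module ℝ E] (N : E → ℝ)
    (N_hom : ∀ c : ℝ, 0 < c → ∀ x, N (c • x) = c * N x)
    (N_add : ∀ x y, N (x + y) ≤ N x + N y) (v : E) :
    ∃ g : E →ₗ[ℝ] ℝ, g v = N v ∧ ∀ x, g x ≤ N x := by
  have N0 : N 0 = 0 := by
    have := N_hom 2 (by norm_num) 0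
    rw [smul_zero] at this
    linarith
  have key : ∀ t : ℝ, t * N v ≤ N (t • v) := by
    intro t
    rcases lt_trichotomy t 0 with h | h | h
    · have h1 := N_hom (-t) (by linarith) v
      have h2 := N_add (t • v) ((-t) • v)
      rw [← add_smul, add_neg_cancel, zero_smul, N0, h1] at h2
      linarith
    · subst h; simp [N0]
    · rw [N_hom t h]
  have H : ∀ c : ℝ, c • v = 0 → (RingHom.id ℝ) c • N v = 0 := by
    intro c hc
    rcases smul_eq_zero.1 hc with h | h
    · simp [h]
    · simp [h, N0]
  obtain ⟨g, hg, hg'⟩ := exists_extension_of_le_sublinear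
    (LinearPMap.mkSpanSingleton' v (N v) H) N N_hom N_add (by
      rintro ⟨x, hx⟩
      obtain ⟨c, rfl⟩ := Submodule.mem_span_singleton.1 hx
      rw [LinearPMap.mkSpanSingleton'_apply]
      exact key c)
  refine ⟨g, ?_, hg'⟩
  have := hg ⟨v, Submodule.mem_span_singleton_self v⟩
  exact this.trans (LinearPMap.mkSpanSingleton'_apply_self _ _ _ _)

theorem cont_integrable {X : Type*} [TopologicalSpace X] [CompactSpace X]
    [MeasurableSpace X] [BorelSpace X] (μ : Measure X) [IsFiniteMeasure μ] (f : C(X, ℝ)) :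
    Integrable f μ := by
  exact f.continuous.integrable_of_hasCompactSupport (HasCompactSupport.of_compactSpace _)

theorem duality {X : Type*} [MetricSpace X] [CompactSpace X] [MeasurableSpace X] [BorelSpace X]
    (μ ν : Measure X) [IsProbabilityMeasure μ] [IsProbabilityMeasure ν] :
    ∃ γ : Measure (X × X), IsProbabilityMeasure γ ∧ γ.map Prod.fst = μ ∧ γ.map Prod.snd = ν ∧
      ∀ ε > 0, ∃ u : X → ℝ, LipschitzWith 1 u ∧
        ∫ p, dist p.1 p.2 ∂γ ≤ ∫ x, u x ∂μ - ∫ x, u x ∂ν + ε := by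
  have hne : Nonempty X := by
    by_contra h
    rw [not_nonempty_iff] at h
    have := measure_univ (μ := μ)
    rw [univ_eq_empty_iff.2 h] at this
    simp at this
  let S : C(X × X, ℝ) → Set ℝ := fun f => {r | ∃ φ ψ : C(X, ℝ),
    (∀ x y, f (x, y) ≤ φ x + ψ y) ∧ r = ∫ x, φ x ∂μ + ∫ x, ψ x ∂ν}
  have hSbd : ∀ f, BddBelow (S f) := by
    intro f
    refine ⟨-‖f‖, ?_⟩
    rintro r ⟨φ, ψ, h, rfl⟩
    have h1 : ∀ x, -‖f‖ - φ x ≤ ∫ y, ψ y ∂ν := by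
      intro x
      calc -‖f‖ - φ x = ∫ y, (-‖f‖ - φ x) ∂ν := by simp
        _ ≤ _ := by
          refine integral_mono (integrable_const _) (cont_integrable ν ψ) fun y => ?_
          have := h x y
          have h2 := (abs_le.1 (f.norm_coe_le_norm (x, y))).1
          simp only
          linarith
    have h2 : ∫ x, (-‖f‖ - ∫ y, ψ y ∂ν) ∂μ ≤ ∫ x, φ x ∂μ := by
      refine integral_mono (integrable_const _) (cont_integrable μ φ) fun x => ?_
      have := h1 x
      simp only
      linarith
    simp at h2
    linarith
  have hSne : ∀ f, (S f).Nonempty := by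
    intro f
    refine ⟨_, ContinuousMap.const _ ‖f‖, 0, fun x y => ?_, rfl⟩
    have h2 := (abs_le.1 (f.norm_coe_le_norm (x, y))).2
    simpa using h2
  let N : C(X × X, ℝ) → ℝ := fun f => sInf (S f)
  have hNle : ∀ f, ∀ r ∈ S f, N f ≤ r := fun f r hr => csInf_le (hSbd f) hr
  have hNle' : ∀ c : ℝ, 0 < c → ∀ f, N (c • f) ≤ c * N f := by
    intro c hc f
    have : c⁻¹ * N (c • f) ≤ N f := by
      refine le_csInf (hSne f) ?_
      rintro r ⟨φ, ψ, h, rfl⟩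
      rw [inv_mul_le_iff₀ hc]
      refine hNle _ _ ⟨c • φ, c • ψ, fun x y => ?_, ?_⟩
      · have := mul_le_mul_of_nonneg_left (h x y) hc.le
        simpa [mul_add] using this
      · simp [integral_const_mul, mul_add]
    rwa [inv_mul_le_iff₀ hc] at this
  have N_hom : ∀ c : ℝ, 0 < c → ∀ f, N (c • f) = c * N f := by
    intro c hc f
    refine le_antisymm (hNle' c hc f) ?_
    have := hNle' c⁻¹ (inv_pos.2 hc) (c • f)
    rwa [smul_smul, inv_mul_cancel₀ hc.ne', one_smul, le_inv_mul_iff₀ hc] at this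
  have N_add : ∀ f g, N (f + g) ≤ N f + N g := by
    intro f g
    refine le_of_forall_pos_le_add fun ε hε => ?_
    obtain ⟨r, ⟨φ, ψ, h, hr⟩, hr'⟩ := exists_lt_of_csInf_lt (hSne f)
      (show sInf (S f) < N f + ε / 2 by change N f < _; linarith)
    obtain ⟨s, ⟨φ', ψ', h', hs⟩, hs'⟩ := exists_lt_of_csInf_lt (hSne g)
      (show sInf (S g) < N g + ε / 2 by change N g < _; linarith)
    have : N (f + g) ≤ r + s := by
      refine hNle _ _ ⟨φ + φ', ψ + ψ', fun x y => ?_, ?_⟩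
      · have := h x y
        have := h' x y
        simp only [ContinuousMap.add_apply]
        linarith
      · simp only [ContinuousMap.add_apply]
        rw [integral_add (cont_integrable μ φ) (cont_integrable μ φ'),
          integral_add (cont_integrable ν ψ) (cont_integrable ν ψ'), hr, hs]
        ring
    linarith
  let c : C(X × X, ℝ) := ⟨fun p => dist p.1 p.2, by fun_prop⟩
  obtain ⟨L, hLc, hL⟩ := hb_point N N_hom N_add (-c)
  have hLpos : ∀ f : C(X × X, ℝ), 0 ≤ f → 0 ≤ L f := by
    intro f hf
    have h1 : N (-f) ≤ 0 := hNle _ _ ⟨0, 0, fun x y => by simpa using hf (x, y), by simp⟩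
    have h2 := hL (-f)
    rw [map_neg] at h2
    linarith
  obtain ⟨γ, hγ, hγL⟩ := riesz_cpt L hLpos
  have hm1 : ∀ φ : C(X, ℝ), ∫ p, φ p.1 ∂γ = ∫ x, φ x ∂μ := by
    have key : ∀ φ : C(X, ℝ), ∫ p, φ p.1 ∂γ ≤ ∫ x, φ x ∂μ := by
      intro φ
      have h1 := hγL (φ.comp ⟨Prod.fst, continuous_fst⟩)
      have h2 : N (φ.comp ⟨Prod.fst, continuous_fst⟩) ≤ ∫ x, φ x ∂μ :=
        hNle _ _ ⟨φ, 0, fun x y => by simp, by simp⟩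
      have h3 := hL (φ.comp ⟨Prod.fst, continuous_fst⟩)
      simp only [ContinuousMap.comp_apply, ContinuousMap.coe_mk] at h1
      linarith
    intro φ
    refine le_antisymm (key φ) ?_
    have := key (-φ)
    simp only [ContinuousMap.neg_apply, integral_neg] at this
    linarith
  have hm2 : ∀ φ : C(X, ℝ), ∫ p, φ p.2 ∂γ = ∫ x, φ x ∂ν := by
    have key : ∀ φ : C(X, ℝ), ∫ p, φ p.2 ∂γ ≤ ∫ x, φ x ∂ν := by
      intro φ
      have h1 := hγL (φ.comp ⟨Prod.snd, continuous_snd⟩)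
      have h2 : N (φ.comp ⟨Prod.snd, continuous_snd⟩) ≤ ∫ x, φ x ∂ν :=
        hNle _ _ ⟨0, φ, fun x y => by simp, by simp⟩
      have h3 := hL (φ.comp ⟨Prod.snd, continuous_snd⟩)
      simp only [ContinuousMap.comp_apply, ContinuousMap.coe_mk] at h1
      linarith
    intro φ
    refine le_antisymm (key φ) ?_
    have := key (-φ)
    simp only [ContinuousMap.neg_apply, integral_neg] at this
    linarith
  have hfst : γ.map Prod.fst = μ := by
    refine ext_of_forall_integral_eq_of_IsFiniteMeasure fun f => ?_
    rw [integral_map measurable_fst.aemeasurable (by fun_prop)]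
    exact hm1 f.toContinuousMap
  have hsnd : γ.map Prod.snd = ν := by
    refine ext_of_forall_integral_eq_of_IsFiniteMeasure fun f => ?_
    rw [integral_map measurable_snd.aemeasurable (by fun_prop)]
    exact hm2 f.toContinuousMap
  refine ⟨γ, ⟨?_⟩, hfst, hsnd, fun ε hε => ?_⟩
  · have : γ.map Prod.fst univ = 1 := by rw [hfst]; simp
    rwa [Measure.map_apply measurable_fst MeasurableSet.univ, preimage_univ] at this
  obtain ⟨r, ⟨φ, ψ, h, hr⟩, hr'⟩ := exists_lt_of_csInf_lt (hSne (-c))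
    (show sInf (S (-c)) < N (-c) + ε by change N (-c) < _; linarith)
  have hc : ∫ p, dist p.1 p.2 ∂γ = - N (-c) := by
    rw [← hLc, map_neg, neg_neg]
    exact hγL c
  have hbd : ∀ x, BddBelow (range fun y => dist x y + ψ y) := by
    intro x
    refine ⟨-φ x, ?_⟩
    rintro _ ⟨y, rfl⟩
    have := h x y
    simp [c] at this
    simp only
    linarith
  let u : X → ℝ := fun x => ⨅ y, dist x y + ψ y
  have hu : LipschitzWith 1 u := by
    refine LipschitzWith.of_le_add fun x y => ?_
    have : u x - dist x y ≤ u y := by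
      refine le_ciInf fun z => ?_
      have h1 : u x ≤ dist x z + ψ z := ciInf_le (hbd x) z
      have h2 := dist_triangle x y z
      linarith
    linarith
  refine ⟨u, hu, ?_⟩
  have h1 : ∫ x, u x ∂ν ≤ ∫ x, ψ x ∂ν := by
    refine integral_mono (cont_integrable ν ⟨u, hu.continuous⟩) (cont_integrable ν ψ) fun x => ?_
    have : u x ≤ dist x x + ψ x := ciInf_le (hbd x) x
    simpa using this
  have h2 : ∫ x, -φ x ∂μ ≤ ∫ x, u x ∂μ := by
    refine integral_mono (cont_integrable μ (-φ)) (cont_integrable μ ⟨u, hu.continuous⟩)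
      fun x => ?_
    refine le_ciInf fun y => ?_
    have := h x y
    simp [c] at this
    linarith
  rw [integral_neg] at h2
  linarith

theorem W1_le_dual {d : ℕ} (Ω : Set (EuclideanSpace ℝ (Fin d)))
    (hΩc : IsCompact Ω)
    (μ ν : Measure (EuclideanSpace ℝ (Fin d)))
    [IsProbabilityMeasure μ] [IsProbabilityMeasure ν]
    (hμΩ : μ Ωᶜ = 0) (hνΩ : ν Ωᶜ = 0)
    (u0 : EuclideanSpace ℝ (Fin d) → ℝ) (hu0 : IsKantorovichPotential Ω μ ν u0) :
    W1 μ ν ≤ ∫ x, u0 x ∂μ - ∫ x, u0 x ∂ν := by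
  have hΩm : MeasurableSet Ω := hΩc.isClosed.measurableSet
  have : CompactSpace Ω := isCompact_iff_compactSpace.1 hΩc
  have hemb : MeasurableEmbedding (Subtype.val : Ω → EuclideanSpace ℝ (Fin d)) :=
    MeasurableEmbedding.subtype_coe hΩm
  have hmap : ∀ m : Measure (EuclideanSpace ℝ (Fin d)), m Ωᶜ = 0 →
      (m.comap (Subtype.val : Ω → _)).map Subtype.val = m := by
    intro m hm
    rw [map_comap_subtype_coe hΩm]
    exact Measure.restrict_eq_self_of_ae_mem (by rw [ae_iff]; exact hm)
  have hprob : ∀ m : Measure (EuclideanSpace ℝ (Fin d)), IsProbabilityMeasure m → m Ωᶜ = 0 →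
      IsProbabilityMeasure (m.comap (Subtype.val : Ω → _)) := by
    intro m hm h0
    constructor
    have h1 : (m.comap (Subtype.val : Ω → _)).map Subtype.val univ = 1 := by
      rw [hmap m h0]; simp
    rwa [Measure.map_apply measurable_subtype_coe MeasurableSet.univ, preimage_univ] at h1
  have := hprob μ inferInstance hμΩ
  have := hprob ν inferInstance hνΩ
  obtain ⟨γ, hγp, hγ1, hγ2, hγ⟩ := duality (μ.comap (Subtype.val : Ω → _))
    (ν.comap (Subtype.val : Ω → _))
  have hW : W1 μ ν ≤ ∫ p, dist p.1 p.2 ∂γ := by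
    have hmeas : Measurable (Prod.map (Subtype.val : Ω → EuclideanSpace ℝ (Fin d))
      (Subtype.val : Ω → EuclideanSpace ℝ (Fin d))) :=
      measurable_subtype_coe.prodMap measurable_subtype_coe
    refine csInf_le ⟨0, ?_⟩ ⟨γ.map (Prod.map Subtype.val Subtype.val), ?_, ?_, ?_, ?_⟩
    · rintro _ ⟨_, _, _, _, rfl⟩
      exact integral_nonneg fun _ => norm_nonneg _
    · exact Measure.isProbabilityMeasure_map hmeas.aemeasurable
    · rw [Measure.map_map measurable_fst hmeas]
      rw [← hmap μ hμΩ, ← hγ1, Measure.map_map measurable_subtype_coe measurable_fst]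
      rfl
    · rw [Measure.map_map measurable_snd hmeas]
      rw [← hmap ν hνΩ, ← hγ2, Measure.map_map measurable_subtype_coe measurable_snd]
      rfl
    · rw [integral_map hmeas.aemeasurable
        (by exact Continuous.aestronglyMeasurable (by fun_prop))]
      refine integral_congr_ae (Filter.Eventually.of_forall fun p => ?_)
      simp [Subtype.dist_eq, dist_eq_norm]
  refine le_of_forall_pos_le_add fun ε hε => ?_
  obtain ⟨u, hu, hle⟩ := hγ ε hε
  let U : EuclideanSpace ℝ (Fin d) → ℝ := Function.extend Subtype.val u 0
  have hUu : ∀ x : Ω, U x = u x := fun x => Subtype.val_injective.extend_apply u 0 x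
  have hU : LipschitzOnWith 1 U Ω := by
    refine LipschitzOnWith.of_dist_le_mul fun x hx y hy => ?_
    rw [hUu ⟨x, hx⟩, hUu ⟨y, hy⟩]
    exact hu.dist_le_mul _ _
  have hint : ∀ m : Measure (EuclideanSpace ℝ (Fin d)), m Ωᶜ = 0 →
      ∫ x, u x ∂(m.comap (Subtype.val : Ω → _)) = ∫ x, U x ∂m := by
    intro m hm
    conv_rhs => rw [← hmap m hm, hemb.integral_map]
    simp only [hUu]
  have h1 := hu0.2 U hU
  rw [hint μ hμΩ, hint ν hνΩ] at hle
  linarith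

theorem grad_eq {d : ℕ} (Ω : Set (EuclideanSpace ℝ (Fin d))) (hΩv : Convex ℝ Ω)
    (u0 : EuclideanSpace ℝ (Fin d) → ℝ) (hu : LipschitzOnWith 1 u0 Ω)
    (x y : EuclideanSpace ℝ (Fin d)) (hx : x ∈ interior Ω) (hy : y ∈ Ω) (hxy : x ≠ y)
    (hdiff : DifferentiableWithinAt ℝ u0 Ω x) (heq : u0 x - u0 y = ‖x - y‖) :
    ∃ g : EuclideanSpace ℝ (Fin d), HasGradientWithinAt u0 g Ω x ∧
        -g = ‖y - x‖⁻¹ • (y - x) := by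
  have hnx : Ω ∈ nhds x := mem_interior_iff_mem_nhds.1 hx
  have hxΩ : x ∈ Ω := interior_subset hx
  have hfd : HasFDerivAt u0 (fderiv ℝ u0 x) x := (hdiff.differentiableAt hnx).hasFDerivAt
  have hnorm : ‖fderiv ℝ u0 x‖ ≤ 1 := by
    simpa using norm_fderiv_le_of_lipschitzOn ℝ hnx hu
  obtain ⟨g, hgdef⟩ := (InnerProductSpace.toDual ℝ (EuclideanSpace ℝ (Fin d))).surjective
    (fderiv ℝ u0 x)
  have hgn : ‖g‖ ≤ 1 := by
    rw [← hgdef] at hnorm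
    simpa using hnorm
  refine ⟨g, ?_, ?_⟩
  · rw [hasGradientWithinAt_iff_hasFDerivWithinAt, hgdef]
    exact hfd.hasFDerivWithinAt
  have hl : 0 < ‖y - x‖ := norm_pos_iff.2 (sub_ne_zero.2 hxy.symm)
  have hder : HasDerivAt (fun t : ℝ => u0 (x + t • (y - x))) (fderiv ℝ u0 x (y - x)) 0 := by
    have h1 : HasDerivAt (fun t : ℝ => x + t • (y - x)) (y - x) 0 := by
      simpa using ((hasDerivAt_id (0 : ℝ)).smul_const (y - x)).const_add x
    have h2 : HasFDerivAt u0 (fderiv ℝ u0 x) (x + (0 : ℝ) • (y - x)) := by simpa using hfd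
    exact h2.comp_hasDerivAt (0 : ℝ) h1
  have hle : fderiv ℝ u0 x (y - x) ≤ -‖y - x‖ := by
    have ht := hder.hasDerivWithinAt (s := Ioi 0)
    rw [hasDerivWithinAt_iff_tendsto_slope' (by simp)] at ht
    refine le_of_tendsto ht ?_
    filter_upwards [Ioo_mem_nhdsGT (show (0 : ℝ) < 1 by norm_num)] with t ht
    have hmem : x + t • (y - x) ∈ Ω := hΩv.add_smul_sub_mem hxΩ hy ⟨ht.1.le, ht.2.le⟩
    have h1 := hu.dist_le_mul _ hmem _ hy
    have h2 : dist (x + t • (y - x)) y = (1 - t) * ‖y - x‖ := by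
      rw [dist_eq_norm, show x + t • (y - x) - y = (-(1 - t)) • (y - x) by module, norm_smul,
        Real.norm_eq_abs, abs_neg, abs_of_pos (by linarith [ht.2])]
    rw [h2, Real.dist_eq] at h1
    have h3 := le_trans (le_abs_self _) h1
    rw [norm_sub_rev] at heq
    simp only [NNReal.coe_one, one_mul] at h3
    rw [slope_def_field, div_le_iff₀ (by linarith [ht.1])]
    simp only [zero_smul, add_zero, sub_zero]
    nlinarith
  rw [← hgdef, InnerProductSpace.toDual_apply_apply] at hle
  set e := ‖y - x‖⁻¹ • (y - x) with he
  have hen : ‖e‖ = 1 := by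
    rw [he, norm_smul, norm_inv, norm_norm, inv_mul_cancel₀ hl.ne']
  have hie : inner ℝ g e ≤ -1 := by
    rw [he, inner_smul_right, inv_mul_le_iff₀ hl]
    linarith
  have h0 : ‖g + e‖ ^ 2 ≤ 0 := by
    rw [norm_add_sq_real, hen]
    nlinarith [norm_nonneg g]
  have h1 : g + e = 0 := by
    rw [← norm_eq_zero]
    exact pow_eq_zero_iff (two_ne_zero) |>.1 (le_antisymm h0 (sq_nonneg _))
  exact neg_eq_of_add_eq_zero_right h1

theorem stmt5 {d : ℕ} (hd : 1 ≤ d) (Ω : Set (EuclideanSpace ℝ (Fin d)))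
    (hΩc : IsCompact Ω) (hΩv : Convex ℝ Ω)
    (μ ν : Measure (EuclideanSpace ℝ (Fin d)))
    [IsProbabilityMeasure μ] [IsProbabilityMeasure ν]
    (hμΩ : μ Ωᶜ = 0) (hνΩ : ν Ωᶜ = 0) (hac : μ ≪ volume)
    (u0 : EuclideanSpace ℝ (Fin d) → ℝ) (hu0 : IsKantorovichPotential Ω μ ν u0)
    (T0 : EuclideanSpace ℝ (Fin d) → EuclideanSpace ℝ (Fin d))
    (hT0 : IsOptimalMap Ω μ ν T0) :
    (∀ᵐ x ∂μ, x = T0 x ∨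
      ∃ g : EuclideanSpace ℝ (Fin d), HasGradientWithinAt u0 g Ω x ∧
        -g = ‖T0 x - x‖⁻¹ • (T0 x - x)) ∧
    (0 < μ {x | x ∈ Ω ∧ x ≠ T0 x} →
      μ ({x | ∃ g : EuclideanSpace ℝ (Fin d), HasGradientWithinAt u0 g Ω x ∧
            -g = ‖T0 x - x‖⁻¹ • (T0 x - x)} ∩ {x | x ∈ Ω ∧ x ≠ T0 x}) /
        μ {x | x ∈ Ω ∧ x ≠ T0 x} = 1) := by
  have hΩm : MeasurableSet Ω := hΩc.isClosed.measurableSet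
  have hμmem : ∀ᵐ x ∂μ, x ∈ Ω := by rw [ae_iff]; exact hμΩ
  have hνmem : ∀ᵐ x ∂ν, x ∈ Ω := by rw [ae_iff]; exact hνΩ
  obtain ⟨hTm, hTmaps, hTpush, hTcost⟩ := hT0
  have hW := W1_le_dual Ω hΩc μ ν hμΩ hνΩ u0 hu0
  have hlip := hu0.1
  obtain ⟨v, hv, hveq⟩ := hlip.extend_real
  obtain ⟨C, hC⟩ := hΩc.exists_bound_of_continuousOn (f := v) hv.continuous.continuousOn
  obtain ⟨R, hR⟩ := hΩc.isBounded.exists_norm_le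
  have hint1 : Integrable v μ := by
    refine Integrable.of_bound hv.continuous.aestronglyMeasurable C ?_
    filter_upwards [hμmem] with x hx using hC x hx
  have hint2 : Integrable (fun x => v (T0 x)) μ := by
    refine Integrable.of_bound
      (hv.continuous.measurable.comp hTm).aestronglyMeasurable C ?_
    filter_upwards [hμmem] with x hx using hC _ (hTmaps hx)
  have hint3 : Integrable (fun x => ‖x - T0 x‖) μ := by
    refine Integrable.of_bound
      (measurable_id.sub hTm).norm.aestronglyMeasurable (R + R) ?_
    filter_upwards [hμmem] with x hx
    rw [norm_norm]
    exact (norm_sub_le _ _).trans (add_le_add (hR x hx) (hR _ (hTmaps hx)))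
  have e1 : ∫ x, u0 x ∂μ = ∫ x, v x ∂μ :=
    integral_congr_ae (by filter_upwards [hμmem] with x hx using hveq hx)
  have e2 : ∫ x, u0 x ∂ν = ∫ x, v (T0 x) ∂μ := by
    rw [integral_congr_ae (g := v) (by filter_upwards [hνmem] with x hx using hveq hx),
      ← hTpush, integral_map hTm.aemeasurable hv.continuous.aestronglyMeasurable]
  have hzero : ∀ᵐ x ∂μ, ‖x - T0 x‖ - (v x - v (T0 x)) = 0 := by
    have hnn : ∀ x, 0 ≤ ‖x - T0 x‖ - (v x - v (T0 x)) := by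
      intro x
      have h1 := hv.dist_le_mul x (T0 x)
      rw [Real.dist_eq, dist_eq_norm] at h1
      have h2 := le_trans (le_abs_self _) h1
      simp only [NNReal.coe_one, one_mul] at h2
      linarith
    have hi12 : Integrable (fun x => v x - v (T0 x)) μ := hint1.sub hint2
    have hi := hint3.sub hi12
    have h0 : ∫ x, (‖x - T0 x‖ - (v x - v (T0 x))) ∂μ = 0 := by
      refine le_antisymm ?_ (integral_nonneg hnn)
      rw [integral_sub hint3 hi12, integral_sub hint1 hint2, hTcost, ← e1, ← e2]
      linarith
    exact (integral_eq_zero_iff_of_nonneg hnn hi).1 h0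
  have hdiff : ∀ᵐ x ∂μ, x ∈ Ω → DifferentiableWithinAt ℝ u0 Ω x :=
    hac.ae_le (hlip.ae_differentiableWithinAt_of_mem (μ := volume))
  have hfr : ∀ᵐ x ∂μ, x ∉ frontier Ω := by
    rw [ae_iff]
    simpa using hac (hΩv.addHaar_frontier volume)
  have main : ∀ᵐ x ∂μ, x = T0 x ∨
      ∃ g : EuclideanSpace ℝ (Fin d), HasGradientWithinAt u0 g Ω x ∧
        -g = ‖T0 x - x‖⁻¹ • (T0 x - x) := by
    filter_upwards [hμmem, hzero, hdiff, hfr] with x hx hz hdx hfx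
    by_cases hxT : x = T0 x
    · exact Or.inl hxT
    refine Or.inr (grad_eq Ω hΩv u0 hlip x (T0 x) ?_ (hTmaps hx) hxT (hdx hx) ?_)
    · by_contra hni
      exact hfx ⟨subset_closure hx, hni⟩
    · rw [hveq hx, hveq (hTmaps hx)]
      linarith
  refine ⟨main, fun hpos => ?_⟩
  have hAB : μ ({x | ∃ g : EuclideanSpace ℝ (Fin d), HasGradientWithinAt u0 g Ω x ∧
            -g = ‖T0 x - x‖⁻¹ • (T0 x - x)} ∩ {x | x ∈ Ω ∧ x ≠ T0 x}) =
        μ {x | x ∈ Ω ∧ x ≠ T0 x} := by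
    refine measure_congr ?_
    filter_upwards [main] with x hx
    refine propext ⟨fun h => h.2, fun h => ⟨hx.resolve_left h.2, h⟩⟩
  rw [hAB]
  exact ENNReal.div_self hpos.ne' (measure_ne_top _ _)
end
end

section
/- Let μ be a Borel probability measure on Ω absolutely continuous with respect to d-dimensional Lebesgue measure, and let ν be a Borel probability measure on Ω with spt(ν) ⊂ M, where M is a C¹ submanifold of ℝ^d of dimension m ≤ d − 2. Let u0 be a Kantorovich potential and T0 an optimal transport map for W1(μ,ν), and let A = {y ∈ spt(ν) : α(y) > 0 and β(y) > 0}. Then ν(A) = 0. -/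
open MeasureTheory Set

noncomputable section

/-- `rayLow Ω u0 x` (denoted α in the paper): the distance from `x` to the lower
endpoint of a transport ray through `x`. -/
def rayLow {d : ℕ} (Ω : Set (EuclideanSpace ℝ (Fin d)))
    (u0 : EuclideanSpace ℝ (Fin d) → ℝ) (x : EuclideanSpace ℝ (Fin d)) : ℝ :=
  sSup {r | ∃ z ∈ Ω, u0 x - u0 z = ‖x - z‖ ∧ r = ‖x - z‖}

/-- `rayHigh Ω u0 x` (denoted β in the paper): the distance from `x` to the upper
endpoint of a transport ray through `x`. -/
def rayHigh {d : ℕ} (Ω : Set (EuclideanSpace ℝ (Fin d)))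
    (u0 : EuclideanSpace ℝ (Fin d) → ℝ) (x : EuclideanSpace ℝ (Fin d)) : ℝ :=
  sSup {r | ∃ z ∈ Ω, u0 z - u0 x = ‖x - z‖ ∧ r = ‖x - z‖}

/-- The support of a Borel measure: the set of points all of whose open neighbourhoods
have positive measure (equivalently, the smallest closed set of full measure). -/
def mSupport {X : Type*} [TopologicalSpace X] [MeasurableSpace X] (μ : Measure X) : Set X :=
  {x | ∀ U : Set X, IsOpen U → x ∈ U → 0 < μ U}

/-- `M` is a C¹ submanifold of `ℝ^d` of dimension `m`: it is covered by countably many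
charts `(U i, φ i)` where `φ i` is a C¹ map, injective on `U i`, with inverse Lipschitz
on the image `φ i '' U i`. -/
def IsC1Submanifold {d : ℕ} (m : ℕ) (M : Set (EuclideanSpace ℝ (Fin d))) : Prop :=
  ∃ (U : ℕ → Set (EuclideanSpace ℝ (Fin d)))
    (φ : ℕ → EuclideanSpace ℝ (Fin d) → EuclideanSpace ℝ (Fin m)),
    M ⊆ ⋃ i, U i ∧
    ∀ i, U i ⊆ M ∧ ContDiffOn ℝ 1 (φ i) (U i) ∧ InjOn (φ i) (U i) ∧
      ∃ (K : NNReal) (ψ : EuclideanSpace ℝ (Fin m) → EuclideanSpace ℝ (Fin d)),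
        LipschitzOnWith K ψ (φ i '' U i) ∧ ∀ x ∈ U i, ψ (φ i x) = x

/- Proof of stmt9 -/

lemma riesz_ext_aux {A E : Type*} [AddCommGroup A] [Module ℝ A] [AddCommGroup E] [Module ℝ E]
    (F : A →ₗ[ℝ] E) (l : A →ₗ[ℝ] ℝ) (s : PointedCone ℝ E)
    (hpos : ∀ a, F a ∈ s → 0 ≤ l a) (hdense : ∀ y, ∃ a, F a + y ∈ s) :
    ∃ g : E →ₗ[ℝ] ℝ, (∀ a, g (F a) = l a) ∧ ∀ x ∈ s, 0 ≤ g x := by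
  have hker : ∀ a, F a = 0 → l a = 0 := by
    intro a ha
    have h1 := hpos a (by rw [ha]; exact s.zero_mem)
    have h2 := hpos (-a) (by rw [map_neg, ha, neg_zero]; exact s.zero_mem)
    rw [map_neg] at h2
    linarith
  have hwd : ∀ a b, F a = F b → l a = l b := by
    intro a b h
    have := hker (a - b) (by rw [map_sub, h, sub_self])
    rw [map_sub] at this; linarith
  let f0 : LinearMap.range F →ₗ[ℝ] ℝ :=
    { toFun := fun x => l x.2.choose
      map_add' := fun x y => by
        rw [← map_add]; apply hwd
        rw [map_add, (x + y).2.choose_spec, x.2.choose_spec, y.2.choose_spec]; rfl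
      map_smul' := fun c x => by
        rw [← map_smul]; apply hwd
        simp only [RingHom.id_apply]
        rw [map_smul, (c • x).2.choose_spec, x.2.choose_spec]; rfl }
  have hf0 : ∀ a, f0 ⟨F a, a, rfl⟩ = l a := by
    intro a
    apply hwd
    exact (⟨F a, a, rfl⟩ : LinearMap.range F).2.choose_spec
  obtain ⟨g, hg, hg'⟩ := riesz_extension s ⟨LinearMap.range F, f0⟩
    (by
      rintro ⟨_, a, rfl⟩ h
      change 0 ≤ f0 ⟨F a, a, rfl⟩
      rw [hf0]; exact hpos a h)
    (by
      intro y
      obtain ⟨a, ha⟩ := hdense y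
      exact ⟨⟨F a, a, rfl⟩, ha⟩)
  refine ⟨g, fun a => ?_, hg'⟩
  rw [← hf0]
  exact hg ⟨F a, a, rfl⟩

open scoped CompactlySupported in
lemma rmk_compact {Y : Type*} [TopologicalSpace Y] [T2Space Y] [CompactSpace Y]
    [MeasurableSpace Y] [BorelSpace Y] (g : C(Y, ℝ) →ₗ[ℝ] ℝ)
    (hg : ∀ f : C(Y, ℝ), 0 ≤ f → 0 ≤ g f) :
    ∃ γ : Measure Y, IsFiniteMeasure γ ∧ ∀ f : C(Y, ℝ), ∫ y, f y ∂γ = g f := by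
  let L : C_c(Y, ℝ) →ₗ[ℝ] ℝ :=
    { toFun := fun f => g f.toContinuousMap
      map_add' := fun a b => by rw [← map_add]; rfl
      map_smul' := fun a b => by rw [RingHom.id_apply, ← map_smul]; rfl }
  let Λ : C_c(Y, ℝ) →ₚ[ℝ] ℝ := PositiveLinearMap.mk₀ L (fun f hf => hg _ hf)
  refine ⟨RealRMK.rieszMeasure Λ, ?_, fun f => ?_⟩
  · have : IsFiniteMeasureOnCompacts (RealRMK.rieszMeasure Λ) := inferInstance
    infer_instance
  · exact RealRMK.integral_rieszMeasure Λ (CompactlySupportedContinuousMap.continuousMapEquiv f)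

lemma integrable_cont {Y : Type*} [TopologicalSpace Y] [CompactSpace Y]
    [MeasurableSpace Y] [BorelSpace Y] (μ : Measure Y) [IsFiniteMeasure μ]
    {f : Y → ℝ} (hf : Continuous f) : Integrable f μ := by
  exact hf.integrable_of_hasCompactSupport (HasCompactSupport.of_compactSpace f)

theorem kant_dual {X : Type*} [MetricSpace X] [CompactSpace X] [MeasurableSpace X] [BorelSpace X]
    (μ ν : Measure X) [IsProbabilityMeasure μ] [IsProbabilityMeasure ν] (v : X → ℝ)
    (hv : LipschitzWith 1 v) (S : ℝ) (hS : S = ∫ x, v x ∂μ - ∫ x, v x ∂ν)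
    (hmax : ∀ u : X → ℝ, LipschitzWith 1 u → ∫ x, u x ∂μ - ∫ x, u x ∂ν ≤ S) :
    ∃ γ : Measure (X × X), IsProbabilityMeasure γ ∧ γ.map Prod.fst = μ ∧ γ.map Prod.snd = ν ∧
      ∫ p, dist p.1 p.2 ∂γ = S := by
  let c : C(X × X, ℝ) := ⟨fun p => dist p.1 p.2, by fun_prop⟩
  let F : (C(X, ℝ) × C(X, ℝ) × ℝ) →ₗ[ℝ] C(X × X, ℝ) :=
    { toFun := fun a => a.1.comp ⟨Prod.fst, continuous_fst⟩ + a.2.1.comp ⟨Prod.snd, continuous_snd⟩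
        + a.2.2 • c
      map_add' := fun a b => by ext p; simp; ring
      map_smul' := fun r a => by ext p; simp; ring }
  have hF : ∀ a p, F a p = a.1 p.1 + a.2.1 p.2 + a.2.2 * dist p.1 p.2 := fun a p => rfl
  have iμ : ∀ f : C(X, ℝ), Integrable f μ := fun f => integrable_cont μ f.continuous
  have iν : ∀ f : C(X, ℝ), Integrable f ν := fun f => integrable_cont ν f.continuous
  let l : (C(X, ℝ) × C(X, ℝ) × ℝ) →ₗ[ℝ] ℝ :=
    { toFun := fun a => ∫ x, a.1 x ∂μ + ∫ x, a.2.1 x ∂ν + a.2.2 * S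
      map_add' := fun a b => by
        simp only [Prod.fst_add, Prod.snd_add, ContinuousMap.add_apply]
        rw [integral_add (iμ _) (iμ _), integral_add (iν _) (iν _)]; ring
      map_smul' := fun r a => by
        simp only [Prod.smul_fst, Prod.smul_snd, ContinuousMap.smul_apply, smul_eq_mul,
          RingHom.id_apply]
        rw [integral_const_mul, integral_const_mul]; ring }
  have hl : ∀ a, l a = ∫ x, a.1 x ∂μ + ∫ x, a.2.1 x ∂ν + a.2.2 * S := fun a => rfl
  let s : PointedCone ℝ C(X × X, ℝ) := PointedCone.positive ℝ _
  have hs : ∀ f, f ∈ s ↔ 0 ≤ f := fun f => PointedCone.mem_positive ℝ _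
  obtain ⟨x0⟩ : Nonempty X := nonempty_of_isProbabilityMeasure μ
  have hpos : ∀ a, F a ∈ s → 0 ≤ l a := by
    rintro ⟨φ, ψ, t⟩ h
    rw [hs] at h
    have h' : ∀ x y, 0 ≤ φ x + ψ y + t * dist x y := fun x y => h (x, y)
    rw [hl]
    simp only
    rcases le_or_gt t 0 with ht | ht
    · -- integrate twice
      have h1 : ∀ x y, 0 ≤ (φ x + t * v x) + (ψ y - t * v y) := by
        intro x y
        have := hv.dist_le_mul x y
        rw [Real.dist_eq] at this
        simp only [NNReal.coe_one, one_mul] at this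
        have h2 := le_abs_self (v x - v y)
        nlinarith [h' x y]
      have ivμ : Integrable v μ := integrable_cont μ hv.continuous
      have ivν : Integrable v ν := integrable_cont ν hv.continuous
      have h2 : ∀ x, 0 ≤ (φ x + t * v x) + (∫ y, ψ y ∂ν - t * ∫ y, v y ∂ν) := by
        intro x
        have := integral_nonneg (μ := ν) (f := fun y => (φ x + t * v x) + (ψ y - t * v y)) (h1 x)
        have e1 : ∫ y, ((φ x + t * v x) + (ψ y - t * v y)) ∂ν
            = (φ x + t * v x) + (∫ y, ψ y ∂ν - t * ∫ y, v y ∂ν) := by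
          rw [integral_add (integrable_const _), integral_const, integral_sub (iν _) (ivν.const_mul t), integral_const_mul]
          · simp
          exact (iν _).sub (ivν.const_mul t)
        rwa [e1] at this
      have := integral_nonneg (μ := μ)
        (f := fun x => (φ x + t * v x) + (∫ y, ψ y ∂ν - t * ∫ y, v y ∂ν)) h2
      have e1 : ∫ x, ((φ x + t * v x) + (∫ y, ψ y ∂ν - t * ∫ y, v y ∂ν)) ∂μ
            = (∫ x, φ x ∂μ + t * ∫ x, v x ∂μ) + (∫ y, ψ y ∂ν - t * ∫ y, v y ∂ν) := by
        rw [integral_add _ (integrable_const _), integral_const, integral_add (iμ _) (ivμ.const_mul t), integral_const_mul]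
        · simp
        exact (iμ _).add (ivμ.const_mul t)
      rw [e1] at this
      rw [hS]; linarith
    · let u : X → ℝ := fun x => ⨅ y, (dist x y + ψ y / t)
      obtain ⟨C, hC⟩ : ∃ C, ∀ y, C ≤ ψ y / t := by
        obtain ⟨C, hC⟩ := (isCompact_range (f := fun y => ψ y / t) (by fun_prop)).bddBelow
        exact ⟨C, fun y => hC ⟨y, rfl⟩⟩
      have hb : ∀ x, BddBelow (range fun y => dist x y + ψ y / t) := fun x =>
        ⟨C, by rintro _ ⟨y, rfl⟩; have := hC y; have := dist_nonneg (x := x) (y := y); simp only; linarith⟩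
      have : Nonempty X := ⟨x0⟩
      have hu : LipschitzWith 1 u := by
        apply LipschitzWith.of_le_add
        intro x y
        rw [← sub_le_iff_le_add]
        apply le_ciInf
        intro z
        have := ciInf_le (hb x) z
        have := dist_triangle x y z
        simp only [u]; linarith
      have h1 : ∀ x, u x ≤ ψ x / t := fun x => by
        have := ciInf_le (hb x) x
        simpa [u] using this
      have h2 : ∀ x, -φ x / t ≤ u x := fun x => by
        apply le_ciInf
        intro y
        have := h' x y
        rw [div_le_iff₀ ht, add_mul, div_mul_cancel₀ _ ht.ne']
        linarith
      have h3 := hmax u hu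
      have h4 := integral_mono (μ := ν) (integrable_cont ν hu.continuous) ((iν ψ).div_const t) h1
      have h5 := integral_mono (μ := μ) (((iμ φ).neg).div_const t) (integrable_cont μ hu.continuous) h2
      simp only [Pi.neg_apply] at h5
      rw [integral_div] at h4 h5
      rw [integral_neg] at h5
      have h6 : -(∫ x, φ x ∂μ) / t - (∫ x, ψ x ∂ν) / t ≤ S := by linarith
      rw [← sub_div, div_le_iff₀ ht] at h6
      linarith
  have hdense : ∀ y, ∃ a, F a + y ∈ s := by
    intro y
    refine ⟨(ContinuousMap.const X ‖y‖, 0, 0), ?_⟩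
    rw [hs]
    intro p
    have := y.norm_coe_le_norm p
    rw [Real.norm_eq_abs] at this
    have := neg_abs_le (y p)
    have h3 := hF (ContinuousMap.const X ‖y‖, 0, 0) p
    change 0 ≤ F (ContinuousMap.const X ‖y‖, 0, 0) p + y p
    rw [h3]
    simp
    linarith
  obtain ⟨g, hg, hg'⟩ := riesz_ext_aux F l s hpos hdense
  obtain ⟨γ, hγ, hγi⟩ := rmk_compact g (fun f hf => hg' f ((hs f).2 hf))
  have hkey : ∀ a, ∫ p, F a p ∂γ = l a := fun a => by rw [hγi, hg]
  have m1 : γ.map Prod.fst = μ := by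
    apply ext_of_forall_integral_eq_of_IsFiniteMeasure
    intro f
    have := hkey (f.toContinuousMap, 0, 0)
    rw [integral_map (by fun_prop) f.continuous.aestronglyMeasurable]
    simpa [hF, hl] using this
  have m2 : γ.map Prod.snd = ν := by
    apply ext_of_forall_integral_eq_of_IsFiniteMeasure
    intro f
    have := hkey (0, f.toContinuousMap, 0)
    rw [integral_map (by fun_prop) f.continuous.aestronglyMeasurable]
    simpa [hF, hl] using this
  refine ⟨γ, ?_, m1, m2, ?_⟩
  · constructor
    have : (γ.map Prod.fst) univ = 1 := by rw [m1]; exact measure_univ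
    rwa [Measure.map_apply measurable_fst MeasurableSet.univ, preimage_univ] at this
  · have := hkey (0, 0, 1)
    simpa [hF, hl] using this

lemma lip_le {E : Type*} [NormedAddCommGroup E] {v : E → ℝ} (hv : LipschitzWith 1 v) (x y : E) :
    v x - v y ≤ ‖x - y‖ := by
  have := hv.dist_le_mul x y
  rw [Real.dist_eq, dist_eq_norm] at this
  simp only [NNReal.coe_one, one_mul] at this
  exact (le_abs_self _).trans this

lemma dir_lip {E : Type*} [NormedAddCommGroup E] [InnerProductSpace ℝ E] {v : E → ℝ}
    (hv : LipschitzWith 1 v) {ε : ℝ} (hε : 0 < ε) {y y' e e' : E} (he : ‖e‖ = 1) (he' : ‖e'‖ = 1)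
    (h1 : v (y + ε • e) = v y + ε) (h2 : v (y - ε • e) = v y - ε)
    (h1' : v (y' + ε • e') = v y' + ε) (h2' : v (y' - ε • e') = v y' - ε) :
    ‖e - e'‖ ≤ ‖y - y'‖ / ε := by
  have a1 := lip_le hv (y + ε • e) (y' - ε • e')
  have a2 := lip_le hv (y' + ε • e') (y - ε • e)
  rw [h1, h2'] at a1
  rw [h1', h2] at a2
  have b1 : y + ε • e - (y' - ε • e') = ε • (e + e') + (y - y') := by rw [smul_add]; abel
  have b2 : y' + ε • e' - (y - ε • e) = ε • (e + e') - (y - y') := by rw [smul_add]; abel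
  rw [b1] at a1
  rw [b2] at a2
  have p1 := parallelogram_law_with_norm ℝ (ε • (e + e')) (y - y')
  have p2 := parallelogram_law_with_norm ℝ e e'
  have n1 : ‖ε • (e + e')‖ = ε * ‖e + e'‖ := by rw [norm_smul, Real.norm_of_nonneg hε.le]
  rw [n1] at p1
  rw [he, he'] at p2
  rw [le_div_iff₀ hε]
  apply le_of_sq_le_sq _ (norm_nonneg _)
  set P := ‖ε • (e + e') + (y - y')‖
  set Q := ‖ε • (e + e') - (y - y')‖
  have hP : 0 ≤ P := norm_nonneg _
  have hQ : 0 ≤ Q := norm_nonneg _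
  have c : 4 * ε ≤ P + Q := by linarith
  have c2 : 8 * ε ^ 2 ≤ P * P + Q * Q := by
    nlinarith [sq_nonneg (P - Q), mul_self_le_mul_self (by positivity) c]
  have d : ‖e - e'‖ ^ 2 = 4 - ‖e + e'‖ ^ 2 := by nlinarith
  rw [mul_pow, d]
  nlinarith

lemma seg_lip {E : Type*} [NormedAddCommGroup E] [NormedSpace ℝ E] {v : E → ℝ}
    (hv : LipschitzWith 1 v) {ε s : ℝ} (hε : 0 ≤ ε) (hs : ε ≤ s) {y e : E} (he : ‖e‖ = 1)
    (h : v (y + s • e) = v y + s) : v (y + ε • e) = v y + ε := by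
  have a := lip_le hv (y + ε • e) y
  have b := lip_le hv (y + s • e) (y + ε • e)
  have c1 : y + ε • e - y = ε • e := by abel
  have c2 : y + s • e - (y + ε • e) = (s - ε) • e := by rw [sub_smul]; abel
  rw [c1, norm_smul, he, Real.norm_of_nonneg hε] at a
  rw [c2, norm_smul, he, Real.norm_of_nonneg (by linarith)] at b
  linarith

lemma seg_lip' {E : Type*} [NormedAddCommGroup E] [NormedSpace ℝ E] {v : E → ℝ}
    (hv : LipschitzWith 1 v) {ε s : ℝ} (hε : 0 ≤ ε) (hs : ε ≤ s) {y e : E} (he : ‖e‖ = 1)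
    (h : v (y - s • e) = v y - s) : v (y - ε • e) = v y - ε := by
  have a := lip_le hv y (y - ε • e)
  have b := lip_le hv (y - ε • e) (y - s • e)
  have c1 : y - (y - ε • e) = ε • e := by abel
  have c2 : y - ε • e - (y - s • e) = (s - ε) • e := by rw [sub_smul]; abel
  rw [c1, norm_smul, he, Real.norm_of_nonneg hε] at a
  rw [c2, norm_smul, he, Real.norm_of_nonneg (by linarith)] at b
  linarith

/-- points interior to transport rays, at distance at least ε from both ends -/
def rayInt {E : Type*} [NormedAddCommGroup E] (Ω : Set E) (v : E → ℝ) (ε : ℝ) : Set E :=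
  {y | y ∈ Ω ∧ ∃ z ∈ Ω, ∃ w ∈ Ω, v y - v z = ‖y - z‖ ∧ v w - v y = ‖w - y‖ ∧
    ε ≤ ‖y - z‖ ∧ ε ≤ ‖w - y‖}

lemma rayInt_compact {E : Type*} [NormedAddCommGroup E] {Ω : Set E} (hΩ : IsCompact Ω)
    {v : E → ℝ} (hv : Continuous v) (ε : ℝ) : IsCompact (rayInt Ω v ε) := by
  have hc : IsCompact ((Ω ×ˢ (Ω ×ˢ Ω)) ∩ {p : E × E × E | v p.1 - v p.2.1 = ‖p.1 - p.2.1‖ ∧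
      v p.2.2 - v p.1 = ‖p.2.2 - p.1‖ ∧ ε ≤ ‖p.1 - p.2.1‖ ∧ ε ≤ ‖p.2.2 - p.1‖}) := by
    apply (hΩ.prod (hΩ.prod hΩ)).inter_right
    simp only [setOf_and]
    exact (isClosed_eq (by fun_prop) (by fun_prop)).inter
      ((isClosed_eq (by fun_prop) (by fun_prop)).inter
      ((isClosed_le (by fun_prop) (by fun_prop)).inter (isClosed_le (by fun_prop) (by fun_prop))))
  convert hc.image continuous_fst using 1
  ext y
  constructor
  · rintro ⟨hy, z, hz, w, hw, h⟩
    exact ⟨(y, z, w), ⟨⟨hy, hz, hw⟩, h⟩, rfl⟩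
  · rintro ⟨⟨y, z, w⟩, ⟨⟨hy, hz, hw⟩, h⟩, rfl⟩
    exact ⟨hy, z, hz, w, hw, h⟩

lemma ray_dir {E : Type*} [NormedAddCommGroup E] [InnerProductSpace ℝ E] {Ω : Set E} {v : E → ℝ}
    (hv : LipschitzWith 1 v) {ε : ℝ} (hε : 0 < ε) {y : E} (hy : y ∈ rayInt Ω v ε) :
    ∃ e : E, ‖e‖ = 1 ∧ v (y + ε • e) = v y + ε ∧ v (y - ε • e) = v y - ε ∧
      ∀ x, v x - v y = ‖x - y‖ → x = y + ‖x - y‖ • e := by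
  obtain ⟨hyΩ, z, hz, w, hw, h1, h2, h3, h4⟩ := hy
  have hn : 0 < ‖y - z‖ := lt_of_lt_of_le hε h3
  have hx : ∀ x, v x - v y = ‖x - y‖ → x = y + ‖x - y‖ • (‖y - z‖⁻¹ • (y - z)) := by
    intro x hx
    have hs : SameRay ℝ (x - y) (y - z) := by
      rw [sameRay_iff_norm_add]
      apply le_antisymm (norm_add_le _ _)
      have := lip_le hv x z
      rw [sub_add_sub_cancel]; linarith
    rw [sameRay_iff_norm_smul_eq] at hs
    rw [smul_comm, hs, smul_smul, inv_mul_cancel₀ hn.ne', one_smul]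
    abel
  have he : ‖‖y - z‖⁻¹ • (y - z)‖ = 1 := by
    rw [norm_smul, norm_inv, norm_norm, inv_mul_cancel₀ hn.ne']
  refine ⟨‖y - z‖⁻¹ • (y - z), he, ?_, ?_, hx⟩
  · apply seg_lip hv hε.le h4 he
    rw [← hx w h2]; linarith
  · apply seg_lip' hv hε.le h3 he
    rw [smul_smul, mul_inv_cancel₀ hn.ne', one_smul, sub_sub_cancel]; linarith

lemma rays_null {d m : ℕ} (hm : m + 2 ≤ d) {Ω : Set (EuclideanSpace ℝ (Fin d))}
    {v : EuclideanSpace ℝ (Fin d) → ℝ} (hv : LipschitzWith 1 v) {ε R : ℝ} (hε : 0 < ε)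
    (hR : 0 ≤ R) (U : Set (EuclideanSpace ℝ (Fin d)))
    (φ : EuclideanSpace ℝ (Fin d) → EuclideanSpace ℝ (Fin m)) (K : NNReal)
    (ψ : EuclideanSpace ℝ (Fin m) → EuclideanSpace ℝ (Fin d))
    (hψ : LipschitzOnWith K ψ (φ '' U)) (hψφ : ∀ x ∈ U, ψ (φ x) = x) :
    volume {x | ∃ y ∈ rayInt Ω v ε ∩ U, ‖x - y‖ ≤ R ∧ v x - v y = ‖x - y‖} = 0 := by
  have hdir := fun (y : EuclideanSpace ℝ (Fin d)) (hy : y ∈ rayInt Ω v ε) => ray_dir hv hε hy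
  choose! e he1 he2 he3 he4 using hdir
  let D : Set (EuclideanSpace ℝ (Fin m) × ℝ) := (φ '' (rayInt Ω v ε ∩ U)) ×ˢ Icc 0 R
  let G : EuclideanSpace ℝ (Fin m) × ℝ → EuclideanSpace ℝ (Fin d) :=
    fun p => ψ p.1 + p.2 • e (ψ p.1)
  have hG : LipschitzOnWith (K + 1 + R.toNNReal * (K / ε.toNNReal)) G D := by
    apply LipschitzOnWith.of_dist_le_mul
    rintro ⟨p, t⟩ ⟨⟨y, ⟨hy, hyU⟩, rfl⟩, ht0, htR⟩ ⟨p', t'⟩ ⟨⟨y', ⟨hy', hyU'⟩, rfl⟩, ht0', htR'⟩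
    simp only at ht0 htR ht0' htR'
    have k1 := hψ.dist_le_mul (φ y) ⟨y, hyU, rfl⟩ (φ y') ⟨y', hyU', rfl⟩
    simp only [G]
    rw [hψφ y hyU, hψφ y' hyU'] at *
    have k2 := dir_lip hv hε (he1 y hy) (he1 y' hy') (he2 y hy) (he3 y hy) (he2 y' hy') (he3 y' hy')
    have hd1 : dist (φ y) (φ y') ≤ dist (φ y, t) (φ y', t') := le_max_left _ _
    have hd2 : dist t t' ≤ dist (φ y, t) (φ y', t') := le_max_right _ _
    set δ := dist (φ y, t) (φ y', t')
    rw [dist_eq_norm] at k1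
    have k3 : ‖y - y'‖ ≤ K * δ := k1.trans (by gcongr)
    have k4 : ‖e y - e y'‖ ≤ K * δ / ε := k2.trans (by gcongr)
    have k5 : ‖(t - t') • e y'‖ ≤ δ := by
      rw [norm_smul, he1 y' hy', mul_one]; rwa [dist_eq_norm] at hd2
    have k6 : ‖t • (e y - e y')‖ ≤ R * (K * δ / ε) := by
      rw [norm_smul, Real.norm_of_nonneg ht0]; gcongr
    have k7 : y + t • e y - (y' + t' • e y') = (y - y') + (t - t') • e y' + t • (e y - e y') := by
      rw [sub_smul, smul_sub]; abel
    rw [dist_eq_norm, k7]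
    refine (norm_add₃_le).trans ?_
    push_cast
    rw [Real.coe_toNNReal _ hR, Real.coe_toNNReal _ hε.le]
    calc _ ≤ K * δ + δ + R * (K * δ / ε) := by linarith
      _ = _ := by ring
  have hsub : {x | ∃ y ∈ rayInt Ω v ε ∩ U, ‖x - y‖ ≤ R ∧ v x - v y = ‖x - y‖} ⊆ G '' D := by
    rintro x ⟨y, ⟨hy, hyU⟩, hxR, hx⟩
    refine ⟨(φ y, ‖x - y‖), ⟨⟨y, ⟨hy, hyU⟩, rfl⟩, norm_nonneg _, hxR⟩, ?_⟩
    simp only [G]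
    rw [hψφ y hyU]
    exact (he4 y hy x hx).symm
  refine measure_mono_null hsub ?_
  have hdim : dimH (G '' D) < (d : NNReal) := by
    calc dimH (G '' D) ≤ dimH D := hG.dimH_image_le
      _ ≤ dimH (univ : Set (EuclideanSpace ℝ (Fin m) × ℝ)) := dimH_mono (subset_univ _)
      _ = ((m + 1 : ℕ) : ENNReal) := by rw [Real.dimH_univ_eq_finrank]; simp
      _ < _ := by
        have : m + 1 < d := by omega
        exact_mod_cast this
  have h0 := hausdorffMeasure_of_dimH_lt hdim
  have hh : (Measure.hausdorffMeasure (Module.finrank ℝ (EuclideanSpace ℝ (Fin d))) :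
    Measure (EuclideanSpace ℝ (Fin d))).IsAddHaarMeasure := isAddHaarMeasure_hausdorffMeasure
  rw [finrank_euclideanSpace_fin] at hh
  exact Measure.absolutelyContinuous_isAddHaarMeasure volume (Measure.hausdorffMeasure (d : ℝ)) h0

lemma w1_le {d : ℕ} {Ω : Set (EuclideanSpace ℝ (Fin d))} (hΩc : IsCompact Ω)
    (μ ν : Measure (EuclideanSpace ℝ (Fin d)))
    [IsProbabilityMeasure μ] [IsProbabilityMeasure ν]
    (hμΩ : μ Ωᶜ = 0) (hνΩ : ν Ωᶜ = 0)
    (v : EuclideanSpace ℝ (Fin d) → ℝ) (hv : LipschitzWith 1 v)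
    (hmax : ∀ u : EuclideanSpace ℝ (Fin d) → ℝ, LipschitzWith 1 u →
      ∫ x, u x ∂μ - ∫ x, u x ∂ν ≤ ∫ x, v x ∂μ - ∫ x, v x ∂ν) :
    W1 μ ν ≤ ∫ x, v x ∂μ - ∫ x, v x ∂ν := by
  have hms : MeasurableSet Ω := hΩc.isClosed.measurableSet
  have : CompactSpace Ω := isCompact_iff_compactSpace.1 hΩc
  have rest : ∀ ρ : Measure (EuclideanSpace ℝ (Fin d)), ρ Ωᶜ = 0 → ρ.restrict Ω = ρ := fun ρ h =>
    Measure.restrict_eq_self_of_ae_mem (mem_ae_iff.2 h)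
  have hmap : ∀ ρ : Measure (EuclideanSpace ℝ (Fin d)), ρ Ωᶜ = 0 →
      (ρ.comap ((↑) : Ω → EuclideanSpace ℝ (Fin d))).map (↑) = ρ := fun ρ h => by
    rw [map_comap_subtype_coe hms, rest ρ h]
  have hint : ∀ ρ : Measure (EuclideanSpace ℝ (Fin d)), ρ Ωᶜ = 0 →
      ∀ f : EuclideanSpace ℝ (Fin d) → ℝ,
      ∫ x : Ω, f x ∂(ρ.comap ((↑) : Ω → EuclideanSpace ℝ (Fin d))) = ∫ x, f x ∂ρ := fun ρ h f => by
    rw [integral_subtype_comap hms, rest ρ h]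
  have hprob : ∀ ρ : Measure (EuclideanSpace ℝ (Fin d)), IsProbabilityMeasure ρ → ρ Ωᶜ = 0 →
      IsProbabilityMeasure (ρ.comap ((↑) : Ω → EuclideanSpace ℝ (Fin d))) := fun ρ hρ h => by
    constructor
    have h1 : (ρ.comap ((↑) : Ω → EuclideanSpace ℝ (Fin d))).map
        ((↑) : Ω → EuclideanSpace ℝ (Fin d)) univ = 1 := by
      rw [hmap ρ h]; exact measure_univ
    rwa [Measure.map_apply measurable_subtype_coe MeasurableSet.univ, preimage_univ] at h1
  have := hprob μ inferInstance hμΩ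
  have := hprob ν inferInstance hνΩ
  obtain ⟨γ, hγ, h1, h2, h3⟩ := kant_dual (X := Ω)
    (μ.comap ((↑) : Ω → EuclideanSpace ℝ (Fin d)))
    (ν.comap ((↑) : Ω → EuclideanSpace ℝ (Fin d))) (fun x => v x)
    (LipschitzWith.of_dist_le_mul fun x y => hv.dist_le_mul x y) (∫ x, v x ∂μ - ∫ x, v x ∂ν)
    (by rw [hint μ hμΩ, hint ν hνΩ]) (by
      intro u hu
      classical
      have hl : LipschitzOnWith 1 (fun x => if h : x ∈ Ω then u ⟨x, h⟩ else 0) Ω := by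
        apply LipschitzOnWith.of_dist_le_mul
        intro x hx y hy
        simp only [hx, hy, dif_pos]
        exact hu.dist_le_mul ⟨x, hx⟩ ⟨y, hy⟩
      obtain ⟨g, hg, hgu⟩ := hl.extend_real
      have e : u = fun x : Ω => g x := by
        ext x
        rw [← hgu x.2]
        simp
      rw [e, hint μ hμΩ g, hint ν hνΩ g]
      exact hmax g hg)
  rw [← h3]
  have hmm : Measurable (Prod.map ((↑) : Ω → EuclideanSpace ℝ (Fin d))
    ((↑) : Ω → EuclideanSpace ℝ (Fin d))) := measurable_subtype_coe.prodMap measurable_subtype_coe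
  apply csInf_le
  · refine ⟨0, ?_⟩
    rintro c ⟨γ, -, -, -, rfl⟩
    exact integral_nonneg fun _ => norm_nonneg _
  · refine ⟨γ.map (Prod.map (↑) (↑)), Measure.isProbabilityMeasure_map hmm.aemeasurable, ?_, ?_, ?_⟩
    · rw [Measure.map_map measurable_fst hmm]
      conv_rhs => rw [← hmap μ hμΩ, ← h1, Measure.map_map measurable_subtype_coe measurable_fst]
      rfl
    · rw [Measure.map_map measurable_snd hmm]
      conv_rhs => rw [← hmap ν hνΩ, ← h2, Measure.map_map measurable_subtype_coe measurable_snd]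
      rfl
    · rw [integral_map hmm.aemeasurable (by fun_prop)]
      rfl

lemma ae_on_ray {d : ℕ} {Ω : Set (EuclideanSpace ℝ (Fin d))} (hΩc : IsCompact Ω)
    (μ ν : Measure (EuclideanSpace ℝ (Fin d)))
    [IsProbabilityMeasure μ] [IsProbabilityMeasure ν]
    (hμΩ : μ Ωᶜ = 0) (hνΩ : ν Ωᶜ = 0)
    (v : EuclideanSpace ℝ (Fin d) → ℝ) (hv : LipschitzWith 1 v)
    (hmax : ∀ u : EuclideanSpace ℝ (Fin d) → ℝ, LipschitzWith 1 u →
      ∫ x, u x ∂μ - ∫ x, u x ∂ν ≤ ∫ x, v x ∂μ - ∫ x, v x ∂ν)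
    (T0 : EuclideanSpace ℝ (Fin d) → EuclideanSpace ℝ (Fin d))
    (hT0 : IsOptimalMap Ω μ ν T0) :
    ∀ᵐ x ∂μ, v x - v (T0 x) = ‖x - T0 x‖ := by
  have hw := w1_le hΩc μ ν hμΩ hνΩ v hv hmax
  obtain ⟨hTm, hTΩ, hTν, hTc⟩ := hT0
  have hΩae : ∀ᵐ x ∂μ, x ∈ Ω := mem_ae_iff.2 hμΩ
  obtain ⟨C, hC⟩ := hΩc.exists_bound_of_continuousOn hv.continuous.continuousOn
  obtain ⟨R, hR⟩ := hΩc.exists_bound_of_continuousOn (f := fun x => x) continuous_id.continuousOn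
  have i1 : Integrable v μ := Integrable.of_bound hv.continuous.aestronglyMeasurable C
    (hΩae.mono fun x hx => hC x hx)
  have i2 : Integrable (fun x => v (T0 x)) μ := Integrable.of_bound
    (hv.continuous.measurable.comp hTm).aestronglyMeasurable C
    (hΩae.mono fun x hx => hC _ (hTΩ hx))
  have i3 : Integrable (fun x => ‖x - T0 x‖) μ := Integrable.of_bound
    (measurable_id.sub hTm).norm.aestronglyMeasurable (R + R)
    (hΩae.mono fun x hx => by
      rw [norm_norm]
      exact (norm_sub_le _ _).trans (add_le_add (hR x hx) (hR _ (hTΩ hx))))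
  have e1 : ∫ x, v x ∂ν = ∫ x, v (T0 x) ∂μ := by
    rw [← hTν, integral_map hTm.aemeasurable hv.continuous.aestronglyMeasurable]
  have hnn : 0 ≤ fun x => ‖x - T0 x‖ - (v x - v (T0 x)) := fun x => by
    have := lip_le hv x (T0 x)
    simp only [Pi.zero_apply]; linarith
  have hz : ∫ x, (‖x - T0 x‖ - (v x - v (T0 x))) ∂μ = 0 := by
    apply le_antisymm _ (integral_nonneg hnn)
    rw [integral_sub i3 (show Integrable (fun x => v x - v (T0 x)) μ from i1.sub i2),
      integral_sub i1 i2, hTc, ← e1]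
    linarith
  rw [integral_eq_zero_iff_of_nonneg hnn (i3.sub (i1.sub i2))] at hz
  filter_upwards [hz] with x hx
  simp only [Pi.zero_apply] at hx
  linarith

lemma mSupport_closed {X : Type*} [TopologicalSpace X] [MeasurableSpace X] (μ : Measure X) :
    IsClosed (mSupport μ) := by
  rw [← isOpen_compl_iff, isOpen_iff_forall_mem_open]
  intro x hx
  simp only [mSupport, mem_compl_iff, mem_setOf_eq, not_forall] at hx
  obtain ⟨U, hU, hxU, h⟩ := hx
  exact ⟨U, fun y hy hy' => h (hy' U hU hy), hU, hxU⟩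

theorem stmt9 {d : ℕ} (hd : 1 ≤ d) (Ω : Set (EuclideanSpace ℝ (Fin d)))
    (hΩc : IsCompact Ω) (hΩv : Convex ℝ Ω)
    (μ ν : Measure (EuclideanSpace ℝ (Fin d)))
    [IsProbabilityMeasure μ] [IsProbabilityMeasure ν]
    (hμΩ : μ Ωᶜ = 0) (hνΩ : ν Ωᶜ = 0) (hac : μ ≪ volume)
    (m : ℕ) (hm : m + 2 ≤ d) (M : Set (EuclideanSpace ℝ (Fin d)))
    (hM : IsC1Submanifold m M) (hspt : mSupport ν ⊆ M)
    (u0 : EuclideanSpace ℝ (Fin d) → ℝ) (hu0 : IsKantorovichPotential Ω μ ν u0)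
    (T0 : EuclideanSpace ℝ (Fin d) → EuclideanSpace ℝ (Fin d))
    (hT0 : IsOptimalMap Ω μ ν T0) :
    ν {y | y ∈ mSupport ν ∧ 0 < rayLow Ω u0 y ∧ 0 < rayHigh Ω u0 y} = 0 := by
  obtain ⟨hu0l, hu0max⟩ := hu0
  obtain ⟨v, hv, huv⟩ := hu0l.extend_real
  have eμ : ∫ x, u0 x ∂μ = ∫ x, v x ∂μ := integral_congr_ae
    ((show ∀ᵐ x ∂μ, x ∈ Ω from mem_ae_iff.2 hμΩ).mono fun x hx => huv hx)
  have eν : ∫ x, u0 x ∂ν = ∫ x, v x ∂ν := integral_congr_ae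
    ((show ∀ᵐ x ∂ν, x ∈ Ω from mem_ae_iff.2 hνΩ).mono fun x hx => huv hx)
  rw [eμ, eν] at hu0max
  have hray := ae_on_ray hΩc μ ν hμΩ hνΩ v hv (fun u hu => hu0max u hu.lipschitzOnWith) T0 hT0
  obtain ⟨hTm, hTΩ, hTν, hTc⟩ := hT0
  obtain ⟨R, hR⟩ := hΩc.exists_bound_of_continuousOn (f := fun x => x) continuous_id.continuousOn
  obtain ⟨U, φ, hMU, hch⟩ := hM
  have hsuppΩ : mSupport ν ⊆ Ω := by
    intro y hy
    by_contra hyΩ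
    have := hy Ωᶜ hΩc.isClosed.isOpen_compl hyΩ
    rw [hνΩ] at this
    exact lt_irrefl _ this
  have hsub : {y | y ∈ mSupport ν ∧ 0 < rayLow Ω u0 y ∧ 0 < rayHigh Ω u0 y} ⊆
      ⋃ n : ℕ, (rayInt Ω v (1 / ((n : ℝ) + 1)) ∩ mSupport ν) := by
    rintro y ⟨hy, hlo, hhi⟩
    have hyΩ := hsuppΩ hy
    obtain ⟨z, hz, hz1, hz2⟩ : ∃ z ∈ Ω, v y - v z = ‖y - z‖ ∧ 0 < ‖y - z‖ := by
      by_contra hcon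
      push Not at hcon
      refine hlo.not_ge (Real.sSup_nonpos ?_)
      rintro r ⟨z, hz, h1, rfl⟩
      exact hcon z hz (by rw [← huv hyΩ, ← huv hz]; exact h1)
    obtain ⟨w, hw, hw1, hw2⟩ : ∃ w ∈ Ω, v w - v y = ‖w - y‖ ∧ 0 < ‖w - y‖ := by
      by_contra hcon
      push Not at hcon
      refine hhi.not_ge (Real.sSup_nonpos ?_)
      rintro r ⟨z, hz, h1, rfl⟩
      rw [norm_sub_rev] at h1 ⊢
      exact hcon z hz (by rw [← huv hyΩ, ← huv hz]; exact h1)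
    obtain ⟨n, hn⟩ := exists_nat_one_div_lt (lt_min hz2 hw2)
    have hn' := lt_min_iff.1 hn
    exact mem_iUnion.2 ⟨n, ⟨hyΩ, z, hz, w, hw, hz1, hw1, hn'.1.le, hn'.2.le⟩, hy⟩
  refine measure_mono_null hsub (measure_iUnion_null fun n => ?_)
  have hεpos : (0 : ℝ) < 1 / ((n : ℝ) + 1) := by positivity
  set ε : ℝ := 1 / ((n : ℝ) + 1)
  have hmeas : MeasurableSet (rayInt Ω v ε ∩ mSupport ν) :=
    (rayInt_compact hΩc hv.continuous ε).isClosed.measurableSet.inter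
      (mSupport_closed ν).measurableSet
  have hR0 : ∀ x ∈ Ω, 0 ≤ R := fun x hx => (norm_nonneg _).trans (hR x hx)
  rw [← hTν] at hmeas ⊢
  rw [Measure.map_apply hTm hmeas, hTν]
  have hnull : μ (⋃ i, {x | ∃ y ∈ rayInt Ω v ε ∩ U i, ‖x - y‖ ≤ |R| + |R| ∧
      v x - v y = ‖x - y‖}) = 0 := by
    refine measure_iUnion_null fun i => hac ?_
    obtain ⟨-, -, -, K, ψ, hψ, hψφ⟩ := hch i
    exact rays_null hm hv hεpos (by positivity) (U i) (φ i) K ψ hψ hψφ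
  rw [measure_eq_zero_iff_ae_notMem] at hnull ⊢
  filter_upwards [hnull, hray, (show ∀ᵐ x ∂μ, x ∈ Ω from mem_ae_iff.2 hμΩ)] with x hx hxr hxΩ hxT
  apply hx
  obtain ⟨hx1, hx2⟩ := hxT
  obtain ⟨i, hi⟩ := mem_iUnion.1 (hMU (hspt hx2))
  refine mem_iUnion.2 ⟨i, T0 x, ⟨hx1, hi⟩, ?_, hxr⟩
  exact (norm_sub_le _ _).trans (add_le_add ((hR x hxΩ).trans (le_abs_self _))
    ((hR _ (hTΩ hxΩ)).trans (le_abs_self _)))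
end
end

section
/- Let μ be a Borel probability measure on Ω absolutely continuous with respect to d-dimensional Lebesgue measure, and let ν be a Borel probability measure on Ω with spt(ν) ⊂ M, where M is a C¹ submanifold of ℝ^d of dimension m ≤ d − 2. Let u0 be a Kantorovich potential for W1(μ,ν). Then every optimal transport map T0 for W1(μ,ν) satisfies, for μ-almost every x ∈ Ω, T0(x) = x − α(x)·∇u0(x) (where in particular u0 is differentiable μ-almost everywhere at points with α(x) > 0, and at points with α(x) = 0 the formula reads T0(x) = x). -/
open MeasureTheory Set

noncomputable section

lemma null_of_lip {d : ℕ} {F : Type*} [NormedAddCommGroup F] [NormedSpace ℝ F]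
    [FiniteDimensional ℝ F] (hF : Module.finrank ℝ F < d) {f : F → EuclideanSpace ℝ (Fin d)}
    {s : Set F} {K : NNReal} (hf : LipschitzOnWith K f s) :
    (volume : Measure (EuclideanSpace ℝ (Fin d))) (f '' s) = 0 := by
  have h1 : dimH (f '' s) < ((d : NNReal) : ENNReal) := by
    refine hf.dimH_image_le.trans_lt ((dimH_mono (subset_univ s)).trans_lt ?_)
    rw [Real.dimH_univ_eq_finrank]
    exact_mod_cast hF
  have h2 := hausdorffMeasure_of_dimH_lt h1
  have h3 : (volume : Measure (EuclideanSpace ℝ (Fin d))) ≪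
      Measure.hausdorffMeasure (Module.finrank ℝ (EuclideanSpace ℝ (Fin d))) :=
    Measure.absolutelyContinuous_isAddHaarMeasure _ _
  apply h3
  simpa using h2

lemma dir_lip_s10 {E : Type*} [NormedAddCommGroup E] [InnerProductSpace ℝ E] {u : E → ℝ}
    (hu : LipschitzWith 1 u) {r : ℝ} (hr : 0 < r) {y1 y2 e1 e2 : E}
    (he1 : ‖e1‖ = 1) (he2 : ‖e2‖ = 1)
    (h1 : ∀ s, |s| ≤ r → u (y1 + s • e1) = u y1 + s)
    (h2 : ∀ s, |s| ≤ r → u (y2 + s • e2) = u y2 + s) :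
    r * ‖e1 - e2‖ ≤ ‖y1 - y2‖ := by
  have hL : ∀ a b, u a - u b ≤ ‖a - b‖ := by
    intro a b
    have := hu.dist_le_mul a b
    rw [Real.dist_eq, dist_eq_norm] at this
    simpa using (le_abs_self _).trans this
  have a1 : u y1 - u y2 + 2 * r ≤ ‖(y1 - y2) + r • (e1 + e2)‖ := by
    have := hL (y1 + r • e1) (y2 + (-r) • e2)
    rw [h1 r (by simp [abs_of_pos hr]), h2 (-r) (by simp [abs_of_pos hr])] at this
    have e : (y1 - y2) + r • (e1 + e2) = y1 + r • e1 - (y2 + (-r) • e2) := by module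
    rw [e]; linarith
  have a2 : u y2 - u y1 + 2 * r ≤ ‖(y1 - y2) - r • (e1 + e2)‖ := by
    have := hL (y2 + r • e2) (y1 + (-r) • e1)
    rw [h2 r (by simp [abs_of_pos hr]), h1 (-r) (by simp [abs_of_pos hr])] at this
    have e : (y1 - y2) - r • (e1 + e2) = - (y2 + r • e2 - (y1 + (-r) • e1)) := by module
    rw [e, norm_neg]; linarith
  have hs1 := hL y1 y2
  have hs2 := hL y2 y1
  rw [norm_sub_rev] at hs2
  have hpar := parallelogram_law_with_norm ℝ (y1 - y2) (r • (e1 + e2))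
  have hpar2 := parallelogram_law_with_norm ℝ e1 e2
  rw [norm_smul, Real.norm_eq_abs, abs_of_pos hr] at hpar
  rw [he1, he2] at hpar2
  set A := ‖y1 - y2 + r • (e1 + e2)‖
  set B := ‖y1 - y2 - r • (e1 + e2)‖
  set s := u y1 - u y2
  have hs3 : u y2 - u y1 = -s := by simp [s]
  rw [hs3] at a2 hs2
  have tri : ‖e1 - e2‖ ≤ 2 := by
    have := norm_sub_le e1 e2; linarith
  by_cases hb : 2 * r ≤ ‖y1 - y2‖
  · nlinarith
  push Not at hb
  have b1 : (s + 2 * r) * (s + 2 * r) ≤ A * A := by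
    apply mul_self_le_mul_self _ a1; linarith
  have b2 : (-s + 2 * r) * (-s + 2 * r) ≤ B * B := by
    apply mul_self_le_mul_self _ a2; linarith
  apply abs_le_of_sq_le_sq' _ (norm_nonneg _) |>.2
  nlinarith [sq_nonneg s]

lemma bad_null {d m : ℕ} (hm : m + 2 ≤ d) (U : Set (EuclideanSpace ℝ (Fin d)))
    (φ : EuclideanSpace ℝ (Fin d) → EuclideanSpace ℝ (Fin m))
    (ψ : EuclideanSpace ℝ (Fin m) → EuclideanSpace ℝ (Fin d)) (K : NNReal)
    (hψ : LipschitzOnWith K ψ (φ '' U)) (hinv : ∀ x ∈ U, ψ (φ x) = x)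
    {u : EuclideanSpace ℝ (Fin d) → ℝ} (hu : LipschitzWith 1 u) (n : ℕ) :
    (volume : Measure (EuclideanSpace ℝ (Fin d)))
      {x | ∃ y ∈ U, ∃ e, ∃ t : ℝ, 0 ≤ t ∧ t ≤ n + 1 ∧ ‖e‖ = 1 ∧
        (∀ s, |s| ≤ 1 / ((n : ℝ) + 1) → u (y + s • e) = u y + s) ∧ x = y + t • e} = 0 := by
  classical
  set r : ℝ := 1 / ((n : ℝ) + 1) with hr
  have hrpos : 0 < r := by positivity
  have hrn : ((n : ℝ) + 1) * r = 1 := by rw [hr]; field_simp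
  set S : Set (EuclideanSpace ℝ (Fin d)) := {y | y ∈ U ∧ ∃ e, ‖e‖ = 1 ∧
    (∀ s, |s| ≤ r → u (y + s • e) = u y + s)} with hS
  have hex : ∀ y, ∃ e : EuclideanSpace ℝ (Fin d), y ∈ S → ‖e‖ = 1 ∧
    (∀ s, |s| ≤ r → u (y + s • e) = u y + s) := by
    intro y
    by_cases h : y ∈ S
    · obtain ⟨-, e, he⟩ := h
      exact ⟨e, fun _ => he⟩
    · exact ⟨0, fun h' => absurd h' h⟩
  choose e he using hex
  let F : EuclideanSpace ℝ (Fin m) × ℝ → EuclideanSpace ℝ (Fin d) :=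
    fun p => ψ p.1 + p.2 • e (ψ p.1)
  have hF : LipschitzOnWith (K + 1 + (n + 1) * (n + 1) * K) F ((φ '' S) ×ˢ Icc 0 ((n : ℝ) + 1)) := by
    apply LipschitzOnWith.of_dist_le_mul
    rintro ⟨_, t1⟩ ⟨⟨y1, hy1, rfl⟩, ht1⟩ ⟨_, t2⟩ ⟨⟨y2, hy2, rfl⟩, ht2⟩
    have hK := hψ.dist_le_mul _ (mem_image_of_mem φ hy1.1) _ (mem_image_of_mem φ hy2.1)
    simp only [F]
    rw [hinv _ hy1.1, hinv _ hy2.1] at hK ⊢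
    have hl := dir_lip_s10 hu hrpos (he y1 hy1).1 (he y2 hy2).1 (he y1 hy1).2 (he y2 hy2).2
    have hl' : ‖e y1 - e y2‖ ≤ (n + 1) * ‖y1 - y2‖ := by
      calc ‖e y1 - e y2‖ = (n + 1) * (r * ‖e y1 - e y2‖) := by rw [← mul_assoc, hrn, one_mul]
        _ ≤ _ := by gcongr
    have hd1 : dist (φ y1) (φ y2) ≤ dist (φ y1, t1) (φ y2, t2) := le_max_left _ _
    have hd2 : |t1 - t2| ≤ dist (φ y1, t1) (φ y2, t2) := le_max_right _ _
    set δ := dist (φ y1, t1) (φ y2, t2)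
    have hK' : ‖y1 - y2‖ ≤ K * δ := by
      rw [← dist_eq_norm]; exact hK.trans (by gcongr)
    rw [dist_eq_norm]
    have e0 : y1 + t1 • e y1 - (y2 + t2 • e y2) =
      (y1 - y2) + (t1 - t2) • e y2 + t1 • (e y1 - e y2) := by module
    rw [e0]
    have ht : |t1| ≤ n + 1 := by rw [abs_of_nonneg ht1.1]; exact ht1.2
    calc _ ≤ ‖y1 - y2‖ + ‖(t1 - t2) • e y2‖ + ‖t1 • (e y1 - e y2)‖ := norm_add₃_le
      _ = ‖y1 - y2‖ + |t1 - t2| + |t1| * ‖e y1 - e y2‖ := by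
        rw [norm_smul, norm_smul, (he y2 hy2).1]; simp
      _ ≤ K * δ + δ + (n + 1) * ((n + 1) * (K * δ)) := by
        gcongr
        exact hl'.trans (by gcongr)
      _ = _ := by push_cast; ring
  have h0 := null_of_lip (d := d) (by simp; omega) hF
  refine measure_mono_null ?_ h0
  rintro x ⟨y, hy, e', t, ht0, ht1, he', hs, rfl⟩
  have hyS : y ∈ S := ⟨hy, e', he', hs⟩
  refine ⟨(φ y, t), ⟨mem_image_of_mem _ hyS, ht0, ht1⟩, ?_⟩
  have hee : e y = e' := by
    have := dir_lip_s10 hu hrpos (he y hyS).1 he' (he y hyS).2 hs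
    rw [sub_self, norm_zero] at this
    have h2 : ‖e y - e'‖ ≤ 0 := by
      by_contra h; push Not at h; nlinarith
    exact sub_eq_zero.1 (norm_le_zero_iff.1 h2)
  simp only [F, hinv y hy, hee]

lemma integrable_of_contOn {d : ℕ} {Ω : Set (EuclideanSpace ℝ (Fin d))}
    (hΩc : IsCompact Ω) (μ : Measure (EuclideanSpace ℝ (Fin d))) [IsProbabilityMeasure μ]
    (hμΩ : μ Ωᶜ = 0) {f : EuclideanSpace ℝ (Fin d) → ℝ} (hf : ContinuousOn f Ω) :
    Integrable f μ := by
  have h := hf.integrableOn_compact (μ := μ) hΩc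
  rwa [IntegrableOn, Measure.restrict_eq_self_of_ae_mem] at h
  exact hμΩ

lemma weak_dual {d : ℕ} {Ω : Set (EuclideanSpace ℝ (Fin d))}
    (hΩc : IsCompact Ω) (hne : Ω.Nonempty) (μ ν : Measure (EuclideanSpace ℝ (Fin d)))
    [IsProbabilityMeasure μ] [IsProbabilityMeasure ν]
    (hμΩ : μ Ωᶜ = 0) (hνΩ : ν Ωᶜ = 0) {D : ℝ}
    (hD : ∀ u : EuclideanSpace ℝ (Fin d) → ℝ, LipschitzOnWith 1 u Ω →
      ∫ x, u x ∂μ - ∫ x, u x ∂ν ≤ D)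
    (φ ψ : C(EuclideanSpace ℝ (Fin d), ℝ)) {t : ℝ} (ht : 0 ≤ t)
    (h : ∀ x ∈ Ω, ∀ y ∈ Ω, 0 ≤ φ x + ψ y + t * ‖x - y‖) :
    0 ≤ ∫ x, φ x ∂μ + ∫ x, ψ x ∂ν + t * D := by
  have : Nonempty Ω := hne.to_subtype
  let u : EuclideanSpace ℝ (Fin d) → ℝ := fun x => ⨅ y : Ω, (ψ y + t * ‖x - y‖)
  have hbdd : ∀ x : EuclideanSpace ℝ (Fin d), BddBelow (range fun y : Ω => ψ y + t * ‖x - y‖) := by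
    intro x
    obtain ⟨B, hB⟩ := (hΩc.image ψ.continuous).bddBelow
    refine ⟨B, ?_⟩
    rintro _ ⟨y, rfl⟩
    have := hB (mem_image_of_mem _ y.2)
    have := mul_nonneg ht (norm_nonneg (x - y))
    simp only
    linarith
  have h1 : ∀ x ∈ Ω, - φ x ≤ u x := by
    intro x hx
    refine le_ciInf fun y => ?_
    have := h x hx y y.2
    linarith
  have h2 : ∀ x ∈ Ω, u x ≤ ψ x := by
    intro x hx
    have := ciInf_le (hbdd x) ⟨x, hx⟩
    simpa [u] using this
  have hL : ∀ x x', u x ≤ u x' + t * ‖x - x'‖ := by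
    intro x x'
    rw [← sub_le_iff_le_add]
    refine le_ciInf fun y => ?_
    have a := ciInf_le (hbdd x) y
    have b : ‖x - y‖ ≤ ‖x - x'‖ + ‖x' - y‖ := norm_sub_le_norm_sub_add_norm_sub _ _ _
    have c := mul_le_mul_of_nonneg_left b ht
    simp only [u] at *
    linarith
  have hLip : LipschitzWith (Real.toNNReal t) u := by
    apply LipschitzWith.of_dist_le_mul
    intro x y
    rw [Real.dist_eq, dist_eq_norm, Real.coe_toNNReal _ ht, abs_le]
    have := hL x y
    have := hL y x
    rw [norm_sub_rev] at this
    constructor <;> linarith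
  have key : ∫ x, u x ∂μ - ∫ x, u x ∂ν ≤ t * D := by
    rcases ht.eq_or_lt with h0 | hpos
    · subst h0
      have : ∀ x, u x = u 0 := fun x => by simp [u]
      simp_rw [this]
      simp
    · have := hD (fun x => t⁻¹ * u x) (by
        apply LipschitzWith.lipschitzOnWith
        apply LipschitzWith.of_dist_le_mul
        intro x y
        have := hLip.dist_le_mul x y
        rw [Real.coe_toNNReal _ ht] at this
        rw [Real.dist_eq] at this ⊢
        rw [← mul_sub, abs_mul, abs_of_pos (inv_pos.2 hpos)]
        calc _ ≤ t⁻¹ * (t * dist x y) := by gcongr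
          _ = _ := by field_simp; simp)
      rw [integral_const_mul, integral_const_mul, ← mul_sub] at this
      rwa [inv_mul_le_iff₀ hpos] at this
  have hu1 := integrable_of_contOn hΩc μ hμΩ hLip.continuous.continuousOn
  have hu2 := integrable_of_contOn hΩc ν hνΩ hLip.continuous.continuousOn
  have hp := integrable_of_contOn hΩc μ hμΩ φ.continuous.continuousOn
  have hq := integrable_of_contOn hΩc ν hνΩ ψ.continuous.continuousOn
  have i1 : ∫ x, - φ x ∂μ ≤ ∫ x, u x ∂μ := by
    apply integral_mono_ae hp.neg hu1
    have : ∀ᵐ x ∂μ, x ∈ Ω := hμΩ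
    filter_upwards [this] with x hx using h1 x hx
  have i2 : ∫ x, u x ∂ν ≤ ∫ x, ψ x ∂ν := by
    apply integral_mono_ae hu2 hq
    have : ∀ᵐ x ∂ν, x ∈ Ω := hνΩ
    filter_upwards [this] with x hx using h2 x hx
  rw [integral_neg] at i1
  linarith

lemma duality_s10 {d : ℕ} {Ω : Set (EuclideanSpace ℝ (Fin d))}
    (hΩc : IsCompact Ω) (hne : Ω.Nonempty) (μ ν : Measure (EuclideanSpace ℝ (Fin d)))
    [IsProbabilityMeasure μ] [IsProbabilityMeasure ν]
    (hμΩ : μ Ωᶜ = 0) (hνΩ : ν Ωᶜ = 0) {D : ℝ}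
    (hD : ∀ u : EuclideanSpace ℝ (Fin d) → ℝ, LipschitzOnWith 1 u Ω →
      ∫ x, u x ∂μ - ∫ x, u x ∂ν ≤ D) :
    ∃ γ : Measure (EuclideanSpace ℝ (Fin d) × EuclideanSpace ℝ (Fin d)),
      IsProbabilityMeasure γ ∧ γ.map Prod.fst = μ ∧ γ.map Prod.snd = ν ∧
      ∫ p, ‖p.1 - p.2‖ ∂γ ≤ D := by
  have : Nonempty Ω := hne.to_subtype
  have : CompactSpace Ω := isCompact_iff_compactSpace.1 hΩc
  have ip := fun φ : C(EuclideanSpace ℝ (Fin d), ℝ) =>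
    integrable_of_contOn hΩc μ hμΩ φ.continuous.continuousOn
  have iq := fun φ : C(EuclideanSpace ℝ (Fin d), ℝ) =>
    integrable_of_contOn hΩc ν hνΩ φ.continuous.continuousOn
  let s : PointedCone ℝ C(Ω × Ω, ℝ) :=
    { carrier := {h | ∃ φ ψ : C(EuclideanSpace ℝ (Fin d), ℝ), ∃ t : ℝ, 0 ≤ t ∧
        ∫ x, φ x ∂μ + ∫ x, ψ x ∂ν + t * D ≤ 0 ∧
        ∀ p : Ω × Ω, - h p ≤ φ p.1 + ψ p.2 + t * ‖(p.1 : EuclideanSpace ℝ (Fin d)) - p.2‖}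
      zero_mem' := ⟨0, 0, 0, le_rfl, by simp, by simp⟩
      add_mem' := by
        rintro h1 h2 ⟨φ1, ψ1, t1, ht1, i1, k1⟩ ⟨φ2, ψ2, t2, ht2, i2, k2⟩
        refine ⟨φ1 + φ2, ψ1 + ψ2, t1 + t2, by positivity, ?_, ?_⟩
        · simp only [ContinuousMap.add_apply]
          rw [integral_add (ip _) (ip _), integral_add (iq _) (iq _)]
          linarith
        · intro p
          have := k1 p
          have := k2 p
          simp only [ContinuousMap.add_apply]
          linarith
      smul_mem' := by
        rintro ⟨c, hc⟩ h1 ⟨φ1, ψ1, t1, ht1, i1, k1⟩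
        refine ⟨c • φ1, c • ψ1, c * t1, by positivity, ?_, ?_⟩
        · simp only [ContinuousMap.smul_apply, smul_eq_mul]
          rw [integral_const_mul, integral_const_mul]
          have := mul_nonneg hc (neg_nonneg.2 i1)
          linarith
        · intro p
          have := mul_le_mul_of_nonneg_left (k1 p) hc
          change - (c * h1 p) ≤ c * φ1 _ + c * ψ1 _ + _
          linarith }
  have hs : ∀ h, h ∈ s ↔ ∃ φ ψ : C(EuclideanSpace ℝ (Fin d), ℝ), ∃ t : ℝ, 0 ≤ t ∧
        ∫ x, φ x ∂μ + ∫ x, ψ x ∂ν + t * D ≤ 0 ∧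
        ∀ p : Ω × Ω, - h p ≤ φ p.1 + ψ p.2 + t * ‖(p.1 : EuclideanSpace ℝ (Fin d)) - p.2‖ :=
    fun h => Iff.rfl
  have h10 : (1 : C(Ω × Ω, ℝ)) ≠ 0 := one_ne_zero
  obtain ⟨g, hg1, hg2⟩ := riesz_extension s (LinearPMap.mkSpanSingleton (1 : C(Ω × Ω, ℝ)) (1 : ℝ) h10)
    (by
      rintro ⟨x, hx⟩ hxs
      obtain ⟨a, rfl⟩ := Submodule.mem_span_singleton.1 hx
      rw [LinearPMap.mkSpanSingleton'_apply]
      obtain ⟨φ, ψ, t, ht, i, k⟩ := (hs _).1 hxs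
      have := weak_dual hΩc hne μ ν hμΩ hνΩ hD (φ + ContinuousMap.const _ a) ψ ht (by
        intro x hx y hy
        have := k (⟨x, hx⟩, ⟨y, hy⟩)
        simp at this ⊢
        linarith)
      simp only [ContinuousMap.add_apply, ContinuousMap.const_apply] at this
      rw [integral_add (ip _) (integrable_const _)] at this
      simp at this ⊢
      linarith)
    (by
      intro y
      refine ⟨⟨‖y‖ • 1, Submodule.mem_span_singleton.2 ⟨_, rfl⟩⟩, 0, 0, 0, le_rfl, by simp, ?_⟩
      intro p
      have := y.norm_coe_le_norm p
      rw [Real.norm_eq_abs, abs_le] at this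
      simp
      linarith)
  have g1 : g 1 = 1 := by
    have := hg1 ⟨1, Submodule.mem_span_singleton_self _⟩
    rw [LinearPMap.mkSpanSingleton_apply] at this
    exact this
  have gpos : ∀ h : C(Ω × Ω, ℝ), (∀ p, 0 ≤ h p) → 0 ≤ g h := by
    intro h hh
    refine hg2 _ ⟨0, 0, 0, le_rfl, by simp, fun p => by simpa using hh p⟩
  let P : C(EuclideanSpace ℝ (Fin d), ℝ) → C(Ω × Ω, ℝ) := fun φ => ⟨fun p => φ p.1, by fun_prop⟩
  let Q : C(EuclideanSpace ℝ (Fin d), ℝ) → C(Ω × Ω, ℝ) := fun φ => ⟨fun p => φ p.2, by fun_prop⟩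
  let c : C(Ω × Ω, ℝ) := ⟨fun p => ‖(p.1 : EuclideanSpace ℝ (Fin d)) - p.2‖, by fun_prop⟩
  have gP' : ∀ φ, ∫ x, φ x ∂μ ≤ g (P φ) := by
    intro φ
    have : 0 ≤ g (P φ - (∫ x, φ x ∂μ) • 1) := by
      refine hg2 _ ⟨-φ, ContinuousMap.const _ (∫ x, φ x ∂μ), 0, le_rfl, ?_, ?_⟩
      · simp [integral_neg]
      · intro p; simp [P]
    rw [map_sub, map_smul, g1] at this
    simp at this; linarith
  have gQ' : ∀ φ, ∫ x, φ x ∂ν ≤ g (Q φ) := by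
    intro φ
    have : 0 ≤ g (Q φ - (∫ x, φ x ∂ν) • 1) := by
      refine hg2 _ ⟨ContinuousMap.const _ (∫ x, φ x ∂ν), -φ, 0, le_rfl, ?_, ?_⟩
      · simp [integral_neg]
      · intro p; simp [Q]
    rw [map_sub, map_smul, g1] at this
    simp at this; linarith
  have gP : ∀ φ, g (P φ) = ∫ x, φ x ∂μ := by
    intro φ
    apply le_antisymm _ (gP' φ)
    have := gP' (-φ)
    have e : P (-φ) = - P φ := rfl
    rw [e, map_neg] at this
    simp only [ContinuousMap.neg_apply, integral_neg] at this
    linarith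
  have gQ : ∀ φ, g (Q φ) = ∫ x, φ x ∂ν := by
    intro φ
    apply le_antisymm _ (gQ' φ)
    have := gQ' (-φ)
    have e : Q (-φ) = - Q φ := rfl
    rw [e, map_neg] at this
    simp only [ContinuousMap.neg_apply, integral_neg] at this
    linarith
  have gc : g c ≤ D := by
    have : 0 ≤ g (D • 1 - c) := by
      refine hg2 _ ⟨ContinuousMap.const _ (-D), 0, 1, zero_le_one, ?_, ?_⟩
      · simp
      · intro p; simp [c]
    rw [map_sub, map_smul, g1] at this
    simp at this; linarith
  let Λ0 : CompactlySupportedContinuousMap (Ω × Ω) ℝ →ₗ[ℝ] ℝ :=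
    { toFun := fun f => g f.toContinuousMap
      map_add' := fun a b => g.map_add a.toContinuousMap b.toContinuousMap
      map_smul' := fun a b => g.map_smul a b.toContinuousMap }
  let Λ := PositiveLinearMap.mk₀ Λ0 (fun f hf => gpos _ (fun p => CompactlySupportedContinuousMap.le_def.1 hf p))
  let γ0 := RealRMK.rieszMeasure Λ
  have hintg : ∀ h : C(Ω × Ω, ℝ), ∫ p, h p ∂γ0 = g h := by
    intro h
    exact RealRMK.integral_rieszMeasure Λ
      ⟨h, HasCompactSupport.of_compactSpace h⟩
  have fin : IsFiniteMeasure γ0 := by infer_instance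
  have hprob : IsProbabilityMeasure γ0 := by
    have := hintg 1
    rw [g1] at this
    simp at this
    constructor
    rw [← ENNReal.toReal_eq_one_iff]
    exact this
  let ι : Ω × Ω → EuclideanSpace ℝ (Fin d) × EuclideanSpace ℝ (Fin d) := fun p => (p.1, p.2)
  have hι : Measurable ι := by
    exact (measurable_subtype_coe.comp measurable_fst).prodMk
      (measurable_subtype_coe.comp measurable_snd)
  have hpm : IsProbabilityMeasure (γ0.map ι) := Measure.isProbabilityMeasure_map hι.aemeasurable
  refine ⟨γ0.map ι, hpm, ?_, ?_, ?_⟩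
  · have : IsProbabilityMeasure ((γ0.map ι).map Prod.fst) :=
      Measure.isProbabilityMeasure_map measurable_fst.aemeasurable
    apply ext_of_forall_integral_eq_of_IsFiniteMeasure
    intro f
    rw [integral_map measurable_fst.aemeasurable f.continuous.aestronglyMeasurable,
      integral_map hι.aemeasurable
        (Continuous.aestronglyMeasurable (by fun_prop))]
    exact (hintg (P f.toContinuousMap)).trans (gP _)
  · have : IsProbabilityMeasure ((γ0.map ι).map Prod.snd) :=
      Measure.isProbabilityMeasure_map measurable_snd.aemeasurable
    apply ext_of_forall_integral_eq_of_IsFiniteMeasure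
    intro f
    rw [integral_map measurable_snd.aemeasurable f.continuous.aestronglyMeasurable,
      integral_map hι.aemeasurable
        (Continuous.aestronglyMeasurable (by fun_prop))]
    exact (hintg (Q f.toContinuousMap)).trans (gQ _)
  · rw [integral_map hι.aemeasurable (Continuous.aestronglyMeasurable (by fun_prop))]
    exact (hintg c).le.trans gc

lemma seg_dir {E : Type*} [NormedAddCommGroup E] [InnerProductSpace ℝ E] {u : E → ℝ}
    (hu : LipschitzWith 1 u) {x z : E} (h : u x - u z = ‖x - z‖) (hne : 0 < ‖x - z‖) :
    ∃ e : E, ‖e‖ = 1 ∧ z = x - ‖x - z‖ • e ∧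
      ∀ s, 0 ≤ s → s ≤ ‖x - z‖ → u (x - s • e) = u x - s := by
  have hL : ∀ a b, u a - u b ≤ ‖a - b‖ := by
    intro a b
    have := hu.dist_le_mul a b
    rw [Real.dist_eq, dist_eq_norm] at this
    simpa using (le_abs_self _).trans this
  set α := ‖x - z‖ with hα
  have he : ‖α⁻¹ • (x - z)‖ = 1 := by
    rw [norm_smul, ← hα, norm_inv, Real.norm_eq_abs, abs_of_pos hne, inv_mul_cancel₀ hne.ne']
  have hz : z = x - α • (α⁻¹ • (x - z)) := by
    rw [smul_smul, mul_inv_cancel₀ hne.ne']; simp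
  generalize α⁻¹ • (x - z) = e at he hz
  refine ⟨e, he, hz, fun s hs0 hs1 => ?_⟩
  have h1 := hL x (x - s • e)
  have h2 := hL (x - s • e) z
  have e1 : x - (x - s • e) = s • e := by module
  have e2 : x - s • e - z = (α - s) • e := by
    have e3 : x - s • e - (x - α • e) = (α - s) • e := by module
    rwa [← hz] at e3
  rw [e1, norm_smul, he, Real.norm_eq_abs, abs_of_nonneg hs0] at h1
  rw [e2, norm_smul, he, Real.norm_eq_abs, abs_of_nonneg (by linarith)] at h2
  linarith

lemma grad_of_ray {E : Type*} [NormedAddCommGroup E] [InnerProductSpace ℝ E] [CompleteSpace E]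
    {u : E → ℝ}
    (hu : LipschitzWith 1 u) {x e : E} (hd : DifferentiableAt ℝ u x) (he : ‖e‖ = 1) {α : ℝ}
    (hα : 0 < α) (h : ∀ s, 0 ≤ s → s ≤ α → u (x - s • e) = u x - s) :
    HasGradientAt u e x := by
  have hg := hd.hasGradientAt
  set g := gradient u x
  have hn : ‖g‖ ≤ 1 := by
    have := norm_fderiv_le_of_lipschitz ℝ (x₀ := x) hu
    simpa [g, gradient] using this
  have hf := hg.hasFDerivAt
  have hline : HasDerivAt (fun s : ℝ => x - s • e) (-e) 0 := by
    simpa using ((hasDerivAt_id (0 : ℝ)).smul_const e).const_sub x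
  have hc : HasDerivAt (fun s : ℝ => u (x - s • e)) (InnerProductSpace.toDual ℝ E g (-e)) 0 := by
    apply HasFDerivAt.comp_hasDerivAt (0 : ℝ) _ hline
    simpa using hf
  have hc2 : HasDerivWithinAt (fun s : ℝ => u (x - s • e)) (-1) (Icc 0 α) 0 := by
    have : HasDerivWithinAt (fun s : ℝ => u x - s) (-1) (Icc 0 α) 0 :=
      ((hasDerivAt_id (0 : ℝ)).const_sub (u x)).hasDerivWithinAt
    exact this.congr (fun s hs => h s hs.1 hs.2) (h 0 le_rfl hα.le)
  have hu' := (uniqueDiffOn_Icc hα 0 ⟨le_rfl, hα.le⟩)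
  have heq := hu'.eq_deriv _ hc.hasDerivWithinAt hc2
  have hi : inner ℝ g e = 1 := by
    simpa using heq
  have : g = e := by
    have hsq := norm_sub_sq_real g e
    rw [hi, he] at hsq
    have : ‖g - e‖ = 0 := by
      have : ‖g - e‖ ^ 2 ≤ 0 := by nlinarith [norm_nonneg g]
      exact pow_eq_zero_iff (two_ne_zero) |>.1 (le_antisymm this (sq_nonneg _))
    exact sub_eq_zero.1 (norm_eq_zero.1 this)
  rwa [this] at hg

theorem stmt10 {d : ℕ} (hd : 1 ≤ d) (Ω : Set (EuclideanSpace ℝ (Fin d)))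
    (hΩc : IsCompact Ω) (hΩv : Convex ℝ Ω)
    (μ ν : Measure (EuclideanSpace ℝ (Fin d)))
    [IsProbabilityMeasure μ] [IsProbabilityMeasure ν]
    (hμΩ : μ Ωᶜ = 0) (hνΩ : ν Ωᶜ = 0) (hac : μ ≪ volume)
    (m : ℕ) (hm : m + 2 ≤ d) (M : Set (EuclideanSpace ℝ (Fin d)))
    (hM : IsC1Submanifold m M) (hspt : mSupport ν ⊆ M)
    (u0 : EuclideanSpace ℝ (Fin d) → ℝ) (hu0 : IsKantorovichPotential Ω μ ν u0)
    (T0 : EuclideanSpace ℝ (Fin d) → EuclideanSpace ℝ (Fin d))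
    (hT0 : IsOptimalMap Ω μ ν T0) :
    ∀ᵐ x ∂μ, (rayLow Ω u0 x = 0 → T0 x = x) ∧
      (rayLow Ω u0 x ≠ 0 → ∃ g : EuclideanSpace ℝ (Fin d),
        HasGradientWithinAt u0 g Ω x ∧ T0 x = x - rayLow Ω u0 x • g) := by
  obtain ⟨u, huL, hue⟩ := hu0.1.extend_real
  have hμm : ∀ᵐ x ∂μ, x ∈ Ω := hμΩ
  have hνm : ∀ᵐ x ∂ν, x ∈ Ω := hνΩ
  have hne : Ω.Nonempty := hμm.exists
  obtain ⟨hTm, hTΩ, hTmap, hTcost⟩ := hT0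
  have hopt : ∀ᵐ x ∂μ, u x - u (T0 x) = ‖x - T0 x‖ := by
    obtain ⟨γ, hγ, hγ1, hγ2, hγc⟩ := duality_s10 hΩc hne μ ν hμΩ hνΩ hu0.2
    have hW : W1 μ ν ≤ ∫ p, ‖p.1 - p.2‖ ∂γ := by
      apply csInf_le
      · refine ⟨0, ?_⟩
        rintro _ ⟨γ, -, -, -, rfl⟩
        positivity
      · exact ⟨γ, hγ, hγ1, hγ2, rfl⟩
    have e1 : ∫ x, u0 x ∂μ = ∫ x, u x ∂μ :=
      integral_congr_ae (by filter_upwards [hμm] with x hx using hue hx)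
    have e2 : ∫ x, u0 x ∂ν = ∫ x, u x ∂ν :=
      integral_congr_ae (by filter_upwards [hνm] with x hx using hue hx)
    have e3 : ∫ x, u x ∂ν = ∫ x, u (T0 x) ∂μ := by
      rw [← hTmap, integral_map hTm.aemeasurable huL.continuous.aestronglyMeasurable]
    have i1 : Integrable u μ := integrable_of_contOn hΩc μ hμΩ huL.continuous.continuousOn
    have i2 : Integrable (fun x => u (T0 x)) μ := by
      have : Integrable u (μ.map T0) := by
        rw [hTmap]; exact integrable_of_contOn hΩc ν hνΩ huL.continuous.continuousOn
      exact this.comp_measurable hTm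
    have i3 : Integrable (fun x => ‖x - T0 x‖) μ := by
      apply Integrable.of_bound (C := Metric.diam Ω)
      · exact (measurable_id.sub hTm).norm.aestronglyMeasurable
      · filter_upwards [hμm] with x hx
        rw [norm_norm, ← dist_eq_norm]
        exact Metric.dist_le_diam_of_mem hΩc.isBounded hx (hTΩ hx)
    have hnn : 0 ≤ᵐ[μ] fun x => ‖x - T0 x‖ - (u x - u (T0 x)) := by
      filter_upwards with x
      have := huL.dist_le_mul x (T0 x)
      rw [Real.dist_eq, dist_eq_norm] at this
      have := (le_abs_self _).trans this
      simp at this ⊢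
      linarith
    have hintg : ∫ x, (‖x - T0 x‖ - (u x - u (T0 x))) ∂μ = 0 := by
      apply le_antisymm _ (integral_nonneg_of_ae hnn)
      have e4 := integral_sub i3 (i1.sub i2)
      have e5 := integral_sub i1 i2
      simp only [Pi.sub_apply] at e4
      rw [e4, e5]
      linarith
    rw [integral_eq_zero_iff_of_nonneg_ae hnn (i3.sub (i1.sub i2))] at hintg
    filter_upwards [hintg] with x hx
    simp at hx
    linarith
  have hdiff : ∀ᵐ x ∂μ, DifferentiableAt ℝ u x := hac.ae_le huL.ae_differentiableAt
  have hTM : ∀ᵐ x ∂μ, T0 x ∈ M := by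
    have h1 : ∀ᵐ y ∂ν, y ∈ ν.support := Measure.support_mem_ae
    rw [← hTmap] at h1
    filter_upwards [ae_of_ae_map hTm.aemeasurable h1] with x hx
    apply hspt
    intro U hU hxU
    rw [hTmap] at hx
    exact (Measure.mem_support_iff_forall _).1 hx U (hU.mem_nhds hxU)
  obtain ⟨U, φ, hcov, hch⟩ := hM
  choose hUM hφ hinj K ψ hψ hinv using hch
  have hxM : ∀ᵐ x ∂μ, x ∉ M := by
    apply hac.ae_le
    have : (volume : Measure (EuclideanSpace ℝ (Fin d))) (⋃ i, (ψ i) '' (φ i '' U i)) = 0 :=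
      measure_iUnion_null fun i => null_of_lip (by simp; omega) (hψ i)
    change volume {x | ¬ (x ∉ M)} = 0
    refine measure_mono_null ?_ this
    intro x hx
    replace hx : ¬ ¬ x ∈ M := hx
    rw [not_not] at hx
    obtain ⟨i, hi⟩ := mem_iUnion.1 (hcov hx)
    exact mem_iUnion.2 ⟨i, φ i x, mem_image_of_mem _ hi, hinv i x hi⟩
  have hbad : ∀ᵐ x ∂μ, ∀ i n : ℕ, ¬ (∃ y ∈ U i, ∃ e, ∃ t : ℝ, 0 ≤ t ∧ t ≤ n + 1 ∧ ‖e‖ = 1 ∧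
        (∀ s, |s| ≤ 1 / ((n : ℝ) + 1) → u (y + s • e) = u y + s) ∧ x = y + t • e) := by
    rw [ae_all_iff]; intro i
    rw [ae_all_iff]; intro n
    apply hac.ae_le
    have := bad_null hm (U i) (φ i) (ψ i) (K i) (hψ i) (hinv i) huL n
    refine ae_iff.2 ?_
    simpa only [not_not] using this
  filter_upwards [hμm, hopt, hdiff, hTM, hxM, hbad] with x hx hox hdx hTx hMx hbx
  have hset : {r | ∃ z ∈ Ω, u0 x - u0 z = ‖x - z‖ ∧ r = ‖x - z‖} =
      (fun z => ‖x - z‖) '' (Ω ∩ {z | u x - u z = ‖x - z‖}) := by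
    ext r
    constructor
    · rintro ⟨z, hz, h1, rfl⟩
      refine ⟨z, ⟨hz, ?_⟩, rfl⟩
      rwa [hue hx, hue hz] at h1
    · rintro ⟨z, ⟨hz, h1⟩, rfl⟩
      refine ⟨z, hz, ?_, rfl⟩
      rwa [hue hx, hue hz]
  have hcpt : IsCompact ((fun z => ‖x - z‖) '' (Ω ∩ {z | u x - u z = ‖x - z‖})) := by
    apply IsCompact.image _ (by fun_prop)
    apply hΩc.inter_right
    exact isClosed_eq (continuous_const.sub huL.continuous) (by fun_prop)
  have hmem : ‖x - T0 x‖ ∈ ((fun z => ‖x - z‖) '' (Ω ∩ {z | u x - u z = ‖x - z‖})) :=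
    ⟨T0 x, ⟨hTΩ hx, hox⟩, rfl⟩
  have hle : ‖x - T0 x‖ ≤ rayLow Ω u0 x := by
    rw [rayLow, hset]
    exact le_csSup hcpt.bddAbove hmem
  have hatt := hcpt.sSup_mem ⟨_, hmem⟩
  rw [← hset] at hatt
  change rayLow Ω u0 x ∈ _ at hatt
  rw [hset] at hatt
  obtain ⟨z, ⟨hz, hzu⟩, hzα⟩ := hatt
  simp only at hzα
  have htpos : 0 < ‖x - T0 x‖ := by
    rw [norm_pos_iff, sub_ne_zero]
    intro h
    exact hMx (h ▸ hTx)
  refine ⟨fun h0 => absurd hle (by rw [h0]; exact not_le.2 htpos), fun _ => ?_⟩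
  rw [← hzα] at hle ⊢
  have hαpos := htpos.trans_le hle
  obtain ⟨e, he1, hez, hes⟩ := seg_dir huL hzu hαpos
  obtain ⟨e', he1', heT, hes'⟩ := seg_dir huL hox htpos
  have hge := grad_of_ray huL hdx he1 hαpos hes
  have hge' := grad_of_ray huL hdx he1' htpos hes'
  obtain rfl : e = e' := hge.unique hge'
  have hgw : HasGradientWithinAt u0 e Ω x := by
    rw [hasGradientWithinAt_iff_hasFDerivWithinAt]
    exact (hge.hasFDerivAt.hasFDerivWithinAt).congr hue (hue hx)
  refine ⟨e, hgw, ?_⟩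
  rcases hle.eq_or_lt with heq | hlt
  · rw [← heq]; exact heT
  exfalso
  set t := ‖x - T0 x‖
  set α := ‖x - z‖
  obtain ⟨i, hi⟩ := mem_iUnion.1 (hcov hTx)
  obtain ⟨n, hn⟩ := exists_nat_gt (max t (max (1 / t) (1 / (α - t))))
  have hn1 := (le_max_left _ _).trans_lt hn
  have hn2 := ((le_max_left _ _).trans (le_max_right _ _)).trans_lt hn
  have hn3 := ((le_max_right _ _).trans (le_max_right _ _)).trans_lt hn
  have hn0 : (0 : ℝ) < n := htpos.trans hn1
  have hαt : 0 < α - t := sub_pos.2 hlt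
  apply hbx i n
  refine ⟨T0 x, hi, e, t, htpos.le, by linarith, he1, ?_, ?_⟩
  · intro s hs
    have k1 : 1 / ((n : ℝ) + 1) ≤ t := by
      rw [div_le_comm₀ (by positivity) htpos]; linarith
    have k2 : 1 / ((n : ℝ) + 1) ≤ α - t := by
      rw [div_le_comm₀ (by positivity) hαt]; linarith
    obtain ⟨s1, s2⟩ := abs_le.1 hs
    have e1 : T0 x + s • e = x - (t - s) • e := by
      rw [heT]; module
    rw [e1, hes (t - s) (by linarith) (by linarith)]
    have := hes t htpos.le hlt.le
    rw [← heT] at this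
    rw [this]; ring
  · have e3 : x = (x - t • e) + t • e := by module
    rwa [← heT] at e3
end
end

section
/- Let μ be a Borel probability measure on Ω absolutely continuous with respect to d-dimensional Lebesgue measure, and let ν be a Borel probability measure on Ω with spt(ν) ⊂ M, where M is a C¹ submanifold of ℝ^d of dimension m ≤ d − 2. Then the optimal transport map for W1(μ,ν) is unique up to modification on sets of μ-measure zero: if T0 and T1 are both optimal transport maps for W1(μ,ν), then T0(x) = T1(x) for μ-almost every x ∈ Ω. -/
open MeasureTheory Set

noncomputable section

/-- Sets of Hausdorff dimension less than `d` are Lebesgue null. -/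
lemma aux_null_of_dimH {d : ℕ} (s : Set (EuclideanSpace ℝ (Fin d))) (h : dimH s < d) :
    volume s = 0 := by
  have h1 : (volume : Measure (EuclideanSpace ℝ (Fin d))) ≪
      Measure.hausdorffMeasure ((Module.finrank ℝ (EuclideanSpace ℝ (Fin d)) : ℕ) : ℝ) :=
    Measure.absolutelyContinuous_isAddHaarMeasure _ _
  refine h1 ?_
  have h2 := hausdorffMeasure_of_dimH_lt (s := s) (d := (d : NNReal)) (by simpa using h)
  simpa using h2

/-- Lipschitz dependence of the ray direction on the point. -/
lemma aux_dir_lip {E : Type*} [NormedAddCommGroup E] [InnerProductSpace ℝ E]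
    (u : E → ℝ) (hu : ∀ x y, u x - u y ≤ ‖x - y‖) (r : ℝ) (hr : 0 < r)
    (y y' e e' : E) (he : ‖e‖ = 1) (he' : ‖e'‖ = 1)
    (h1 : u (y + r • e) = u y + r) (h2 : u (y - r • e) = u y - r)
    (h1' : u (y' + r • e') = u y' + r) (h2' : u (y' - r • e') = u y' - r) :
    ‖e - e'‖ ≤ r⁻¹ * ‖y - y'‖ := by
  rw [inv_mul_eq_div, le_div_iff₀ hr]
  have hee : ‖e - e'‖ ≤ 2 := by
    have := norm_sub_le e e'
    linarith
  rcases le_or_gt (2 * r) ‖y - y'‖ with hc | hc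
  · nlinarith
  have ha := hu (y + r • e) (y' - r • e')
  have hb := hu (y' + r • e') (y - r • e)
  rw [h1, h2'] at ha
  rw [h1', h2] at hb
  have e1 : y + r • e - (y' - r • e') = r • (e + e') + (y - y') := by
    rw [smul_add]; abel
  have e2 : y' + r • e' - (y - r • e) = r • (e + e') - (y - y') := by
    rw [smul_add]; abel
  rw [e1] at ha
  rw [e2] at hb
  have hw1 := hu y y'
  have hw2 := hu y' y
  rw [norm_sub_rev] at hw2
  have p1 := parallelogram_law_with_norm ℝ (r • (e + e')) (y - y')
  have p2 := parallelogram_law_with_norm ℝ e e'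
  rw [norm_smul, Real.norm_of_nonneg hr.le] at p1
  rw [he, he'] at p2
  have q1 : (u y - u y' + 2 * r) ^ 2 ≤ ‖r • (e + e') + (y - y')‖ ^ 2 := by
    apply pow_le_pow_left₀ <;> linarith
  have q2 : (u y' - u y + 2 * r) ^ 2 ≤ ‖r • (e + e') - (y - y')‖ ^ 2 := by
    apply pow_le_pow_left₀ <;> linarith
  have q3 : (‖e - e'‖ * r) ^ 2 ≤ ‖y - y'‖ ^ 2 := by
    have : ‖e + e'‖ ^ 2 = 4 - ‖e - e'‖ ^ 2 := by linarith
    have p3 : (r * ‖e + e'‖) ^ 2 = r ^ 2 * (4 - ‖e - e'‖ ^ 2) := by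
      rw [← this]; ring
    rw [p3] at p1
    nlinarith [sq_nonneg (u y - u y')]
  exact (pow_le_pow_iff_left₀ (by positivity) (by positivity) two_ne_zero).1 q3

/-- If `u` drops at full rate along the segment from `x` to `z`, it is affine in between. -/
lemma aux_aff {E : Type*} [NormedAddCommGroup E] [InnerProductSpace ℝ E]
    (u : E → ℝ) (hu : ∀ x y, u x - u y ≤ ‖x - y‖) (x y z : E) (hxy : x ≠ y) (hyz : y ≠ z)
    (h1 : u x - u y = ‖x - y‖) (h2 : u y - u z = ‖y - z‖) (r : ℝ) (hr : 0 < r)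
    (hrx : r ≤ ‖x - y‖) (hrz : r ≤ ‖y - z‖) :
    ∃ e : E, ‖e‖ = 1 ∧ u (y + r • e) = u y + r ∧ u (y - r • e) = u y - r ∧
      x = y + ‖x - y‖ • e := by
  have hxz : ‖x - z‖ = ‖x - y‖ + ‖y - z‖ := by
    apply le_antisymm (norm_sub_le_norm_sub_add_norm_sub _ _ _)
    have := hu x z
    linarith
  have hs : SameRay ℝ (x - y) (y - z) := by
    rw [sameRay_iff_norm_add]
    simpa using hxz
  have hx0 : 0 < ‖x - y‖ := norm_pos_iff.2 (sub_ne_zero.2 hxy)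
  have hz0 : 0 < ‖y - z‖ := norm_pos_iff.2 (sub_ne_zero.2 hyz)
  have hinv := (sameRay_iff_inv_norm_smul_eq_of_ne (sub_ne_zero.2 hxy) (sub_ne_zero.2 hyz)).1 hs
  set e := ‖x - y‖⁻¹ • (x - y) with he
  have he1 : ‖e‖ = 1 := by
    rw [he, norm_smul, norm_inv, norm_norm, inv_mul_cancel₀ hx0.ne']
  have hxe : x = y + ‖x - y‖ • e := by
    rw [he, smul_smul, mul_inv_cancel₀ hx0.ne', one_smul]; abel
  have hze : z = y - ‖y - z‖ • e := by
    rw [hinv, smul_smul, mul_inv_cancel₀ hz0.ne', one_smul]; abel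
  refine ⟨e, he1, ?_, ?_, hxe⟩
  · have a := hu (y + r • e) y
    have b := hu x (y + r • e)
    have c1 : y + r • e - y = r • e := by abel
    have c2 : x - (y + r • e) = (‖x - y‖ - r) • e := by
      conv_lhs => rw [hxe]
      rw [sub_smul]; abel
    rw [c1, norm_smul, he1, Real.norm_of_nonneg hr.le] at a
    rw [c2, norm_smul, he1, Real.norm_of_nonneg (by linarith)] at b
    linarith
  · have a := hu y (y - r • e)
    have b := hu (y - r • e) z
    have c1 : y - (y - r • e) = r • e := by abel
    have c2 : y - r • e - z = (‖y - z‖ - r) • e := by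
      conv_lhs => rw [hze]
      rw [sub_smul]; abel
    rw [c1, norm_smul, he1, Real.norm_of_nonneg hr.le] at a
    rw [c2, norm_smul, he1, Real.norm_of_nonneg (by linarith)] at b
    linarith

lemma aux_dim_lt {d m : ℕ} (hm : m + 2 ≤ d) (A : Set (EuclideanSpace ℝ (Fin m) × ℝ)) :
    dimH A < d := by
  calc dimH A ≤ dimH (univ : Set (EuclideanSpace ℝ (Fin m) × ℝ)) := dimH_mono (subset_univ _)
    _ = ((m + 1 : ℕ) : ENNReal) := by rw [Real.dimH_univ_eq_finrank]; simp
    _ < d := by exact_mod_cast (by omega)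

/-- One chart, quantified version. -/
lemma aux_null_chart {d m : ℕ} (hm : m + 2 ≤ d)
    (u : EuclideanSpace ℝ (Fin d) → ℝ) (hu : ∀ x y, u x - u y ≤ ‖x - y‖)
    (B : Set (EuclideanSpace ℝ (Fin m))) (K : NNReal)
    (ψ : EuclideanSpace ℝ (Fin m) → EuclideanSpace ℝ (Fin d))
    (hψ : LipschitzOnWith K ψ B) (r R : ℝ) (hr : 0 < r) (hR : 0 < R) :
    volume {x | ∃ v ∈ B, ∃ e : EuclideanSpace ℝ (Fin d), ‖e‖ = 1 ∧
      u (ψ v + r • e) = u (ψ v) + r ∧ u (ψ v - r • e) = u (ψ v) - r ∧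
      ∃ t ∈ Icc 0 R, x = ψ v + t • e} = 0 := by
  classical
  let P : EuclideanSpace ℝ (Fin m) → EuclideanSpace ℝ (Fin d) → Prop := fun v e =>
    ‖e‖ = 1 ∧ u (ψ v + r • e) = u (ψ v) + r ∧ u (ψ v - r • e) = u (ψ v) - r
  let dir : EuclideanSpace ℝ (Fin m) → EuclideanSpace ℝ (Fin d) := fun v =>
    if h : ∃ e, P v e then h.choose else 0
  have hdir : ∀ v e, P v e → P v (dir v) := by
    intro v e he
    have h : ∃ e, P v e := ⟨e, he⟩
    simp only [dir, dif_pos h]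
    exact h.choose_spec
  have hlip : ∀ v v' e e', P v e → P v' e' → ‖e - e'‖ ≤ r⁻¹ * ‖ψ v - ψ v'‖ := by
    intro v v' e e' h h'
    exact aux_dir_lip u hu r hr _ _ _ _ h.1 h'.1 h.2.1 h.2.2 h'.2.1 h'.2.2
  have huniq : ∀ v e, P v e → e = dir v := by
    intro v e he
    have := hlip v v e (dir v) he (hdir v e he)
    simp only [sub_self, norm_zero, mul_zero] at this
    exact sub_eq_zero.1 (norm_le_zero_iff.1 this)
  let A : Set (EuclideanSpace ℝ (Fin m) × ℝ) := {p | p.1 ∈ B ∧ P p.1 (dir p.1) ∧ p.2 ∈ Icc 0 R}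
  let F : EuclideanSpace ℝ (Fin m) × ℝ → EuclideanSpace ℝ (Fin d) :=
    fun p => ψ p.1 + p.2 • dir p.1
  have hF : LipschitzOnWith (Real.toNNReal (K + (1 + R * (r⁻¹ * K)))) F A := by
    apply LipschitzOnWith.of_dist_le_mul
    rintro ⟨v, t⟩ ⟨hv, hP, ht⟩ ⟨v', t'⟩ ⟨hv', hP', ht'⟩
    simp only at hv hP ht hv' hP' ht'
    rw [Real.coe_toNNReal _ (by positivity)]
    have a1 := hψ.dist_le_mul v hv v' hv'
    have a2 := hlip v v' _ _ hP hP'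
    have a3 : dist v v' ≤ dist (v, t) (v', t') := le_max_left _ _
    have a4 : dist t t' ≤ dist (v, t) (v', t') := le_max_right _ _
    set D := dist (v, t) (v', t')
    have hD : 0 ≤ D := dist_nonneg
    rw [dist_eq_norm] at a1 ⊢
    have a5 : ‖ψ v - ψ v'‖ ≤ K * D := a1.trans (by gcongr)
    have a6 : F (v, t) - F (v', t') =
        (ψ v - ψ v') + ((t - t') • dir v + t' • (dir v - dir v')) := by
      simp only [F, sub_smul, smul_sub]; abel
    rw [a6]
    have b1 : ‖(t - t') • dir v‖ ≤ D := by
      rw [norm_smul, hP.1, mul_one, ← dist_eq_norm]; exact a4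
    have b2 : ‖t' • (dir v - dir v')‖ ≤ R * (r⁻¹ * (K * D)) := by
      rw [norm_smul, Real.norm_of_nonneg ht'.1]
      have : 0 < r⁻¹ := inv_pos.2 hr
      gcongr
      · exact ht'.2
      · exact a2.trans (by gcongr)
    calc _ ≤ ‖ψ v - ψ v'‖ + (‖(t - t') • dir v‖ + ‖t' • (dir v - dir v')‖) :=
          (norm_add_le _ _).trans (by gcongr; exact norm_add_le _ _)
      _ ≤ K * D + (D + R * (r⁻¹ * (K * D))) := by gcongr
      _ = _ := by ring
  apply aux_null_of_dimH
  refine lt_of_le_of_lt (dimH_mono (t := F '' A) ?_)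
    (lt_of_le_of_lt hF.dimH_image_le (aux_dim_lt hm A))
  rintro x ⟨v, hv, e, h1, h2, h3, t, ht, rfl⟩
  have hP : P v e := ⟨h1, h2, h3⟩
  exact ⟨(v, t), ⟨hv, hdir v e hP, ht⟩, by simp only [F]; rw [← huniq v e hP]⟩

/-- The union of transport rays through (relative interior) points of a set covered by countably
many Lipschitz images is null. -/
lemma aux_null_rays {d m : ℕ} (hm : m + 2 ≤ d)
    (u : EuclideanSpace ℝ (Fin d) → ℝ) (hu : ∀ x y, u x - u y ≤ ‖x - y‖)
    (M : Set (EuclideanSpace ℝ (Fin d)))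
    (B : ℕ → Set (EuclideanSpace ℝ (Fin m))) (K : ℕ → NNReal)
    (ψ : ℕ → EuclideanSpace ℝ (Fin m) → EuclideanSpace ℝ (Fin d))
    (hψ : ∀ i, LipschitzOnWith (K i) (ψ i) (B i)) (hM : M ⊆ ⋃ i, ψ i '' B i) :
    volume {x | ∃ y ∈ M, ∃ z, x ≠ y ∧ y ≠ z ∧ u x - u y = ‖x - y‖ ∧ u y - u z = ‖y - z‖} = 0 := by
  have key : volume (⋃ i : ℕ, ⋃ k : ℕ, {x | ∃ v ∈ B i, ∃ e : EuclideanSpace ℝ (Fin d), ‖e‖ = 1 ∧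
      u (ψ i v + (1 / ((k : ℝ) + 1)) • e) = u (ψ i v) + (1 / ((k : ℝ) + 1)) ∧
      u (ψ i v - (1 / ((k : ℝ) + 1)) • e) = u (ψ i v) - (1 / ((k : ℝ) + 1)) ∧
      ∃ t ∈ Icc 0 ((k : ℝ) + 1), x = ψ i v + t • e}) = 0 := by
    rw [measure_iUnion_null_iff]; intro i
    rw [measure_iUnion_null_iff]; intro k
    exact aux_null_chart hm u hu (B i) (K i) (ψ i) (hψ i) _ _ (by positivity) (by positivity)
  refine measure_mono_null ?_ key
  rintro x ⟨y, hy, z, hxy, hyz, h1, h2⟩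
  obtain ⟨i, v, hv, rfl⟩ := mem_iUnion.1 (hM hy)
  have hx0 : 0 < ‖x - ψ i v‖ := norm_pos_iff.2 (sub_ne_zero.2 hxy)
  have hz0 : 0 < ‖ψ i v - z‖ := norm_pos_iff.2 (sub_ne_zero.2 hyz)
  obtain ⟨k1, hk1⟩ := exists_nat_one_div_lt hx0
  obtain ⟨k2, hk2⟩ := exists_nat_one_div_lt hz0
  obtain ⟨k3, hk3⟩ := exists_nat_gt ‖x - ψ i v‖
  let k := max k1 (max k2 k3)
  have e1 : (k1 : ℝ) ≤ k := by exact_mod_cast le_max_left _ _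
  have e2 : (k2 : ℝ) ≤ k := by
    exact_mod_cast (le_max_left k2 k3).trans (le_max_right k1 _)
  have e3 : (k3 : ℝ) ≤ k := by
    exact_mod_cast (le_max_right k2 k3).trans (le_max_right k1 _)
  have f1 : 1 / ((k : ℝ) + 1) ≤ 1 / ((k1 : ℝ) + 1) := by gcongr
  have f2 : 1 / ((k : ℝ) + 1) ≤ 1 / ((k2 : ℝ) + 1) := by gcongr
  obtain ⟨e, he1, he2, he3, he4⟩ := aux_aff u hu x (ψ i v) z hxy hyz h1 h2
    (1 / ((k : ℝ) + 1)) (by positivity) (by linarith) (by linarith)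
  refine mem_iUnion.2 ⟨i, mem_iUnion.2 ⟨k, v, hv, e, he1, he2, he3, _, ⟨norm_nonneg _, ?_⟩, he4⟩⟩
  linarith

lemma aux_null_M {d m : ℕ} (hm : m + 2 ≤ d)
    (M : Set (EuclideanSpace ℝ (Fin d)))
    (B : ℕ → Set (EuclideanSpace ℝ (Fin m))) (K : ℕ → NNReal)
    (ψ : ℕ → EuclideanSpace ℝ (Fin m) → EuclideanSpace ℝ (Fin d))
    (hψ : ∀ i, LipschitzOnWith (K i) (ψ i) (B i)) (hM : M ⊆ ⋃ i, ψ i '' B i) :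
    volume M = 0 := by
  refine measure_mono_null hM ?_
  rw [measure_iUnion_null_iff]; intro i
  apply aux_null_of_dimH
  refine lt_of_le_of_lt (hψ i).dimH_image_le ?_
  calc dimH (B i) ≤ dimH (univ : Set (EuclideanSpace ℝ (Fin m))) := dimH_mono (subset_univ _)
    _ = (m : ENNReal) := by rw [Real.dimH_univ_eq_finrank]; simp
    _ < d := by exact_mod_cast (by omega)

/-- At a differentiability point the ray direction is unique. -/
lemma aux_dir_unique {E : Type*} [NormedAddCommGroup E] [InnerProductSpace ℝ E]
    (u : E → ℝ) (hu : ∀ x y, u x - u y ≤ ‖x - y‖) (x y z : E) (hd : DifferentiableAt ℝ u x)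
    (hxy : x ≠ y) (hxz : x ≠ z)
    (h1 : u x - u y = ‖x - y‖) (h2 : u x - u z = ‖x - z‖) :
    ‖x - y‖⁻¹ • (x - y) = ‖x - z‖⁻¹ • (x - z) := by
  have key : ∀ y, x ≠ y → u x - u y = ‖x - y‖ → ∃ e : E, ‖x - y‖⁻¹ • (x - y) = e ∧ ‖e‖ = 1 ∧
      fderiv ℝ u x e = 1 := by
    intro y hxy h1
    have hx0 : 0 < ‖x - y‖ := norm_pos_iff.2 (sub_ne_zero.2 hxy)
    refine ⟨_, rfl, ?_, ?_⟩
    · rw [norm_smul, norm_inv, norm_norm, inv_mul_cancel₀ hx0.ne']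
    set e := ‖x - y‖⁻¹ • (x - y) with he
    have he1 : ‖e‖ = 1 := by
      rw [he, norm_smul, norm_inv, norm_norm, inv_mul_cancel₀ hx0.ne']
    have hye : y = x - ‖x - y‖ • e := by
      rw [he, smul_smul, mul_inv_cancel₀ hx0.ne', one_smul]; abel
    have haff : ∀ t ∈ Icc (0 : ℝ) ‖x - y‖, u (x + t • (-e)) = u x - t := by
      intro t ht
      have a := hu x (x + t • (-e))
      have b := hu (x + t • (-e)) y
      have c1 : x - (x + t • (-e)) = t • e := by rw [smul_neg]; abel
      have c2 : x + t • (-e) - y = (‖x - y‖ - t) • e := by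
        conv_lhs => rw [hye]
        rw [smul_neg, sub_smul]; abel
      rw [c1, norm_smul, he1, Real.norm_of_nonneg ht.1] at a
      rw [c2, norm_smul, he1, Real.norm_of_nonneg (by linarith [ht.2])] at b
      linarith
    have hl : HasDerivAt (fun t : ℝ => u (x + t • (-e))) (fderiv ℝ u x (-e)) 0 :=
      (hd.hasFDerivAt.hasLineDerivAt (-e))
    have hw := hl.hasDerivWithinAt (s := Icc (0 : ℝ) ‖x - y‖)
    have hw2 : HasDerivWithinAt (fun t : ℝ => u x - t) (-1) (Icc (0 : ℝ) ‖x - y‖) 0 := by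
      simpa using ((hasDerivAt_id (0 : ℝ)).const_sub (u x)).hasDerivWithinAt
    have hw3 : HasDerivWithinAt (fun t : ℝ => u (x + t • (-e))) (-1) (Icc (0 : ℝ) ‖x - y‖) 0 :=
      hw2.congr haff (haff 0 ⟨le_rfl, hx0.le⟩)
    have := (uniqueDiffOn_Icc hx0 0 ⟨le_rfl, hx0.le⟩).eq_deriv _ hw hw3
    rw [map_neg] at this
    linarith
  obtain ⟨e, he, he1, he2⟩ := key y hxy h1
  obtain ⟨f, hf, hf1, hf2⟩ := key z hxz h2
  rw [he, hf]
  have hnorm : ‖fderiv ℝ u x‖ ≤ 1 := by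
    have hlip : LipschitzWith 1 u := by
      apply LipschitzWith.of_dist_le_mul
      intro a b
      rw [Real.dist_eq, NNReal.coe_one, one_mul, dist_eq_norm]
      have := hu a b
      have h' := hu b a
      rw [norm_sub_rev] at h'
      rw [abs_le]; constructor <;> linarith
    simpa using norm_fderiv_le_of_lipschitz ℝ hlip
  have h2 : 2 ≤ ‖e + f‖ := by
    have h3 : fderiv ℝ u x (e + f) = 2 := by rw [map_add, he2, hf2]; norm_num
    have h4 := (fderiv ℝ u x).le_opNorm (e + f)
    rw [h3] at h4
    have h5 : ‖(2 : ℝ)‖ = 2 := by norm_num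
    rw [h5] at h4
    nlinarith [norm_nonneg (e + f)]
  have p := parallelogram_law_with_norm ℝ e f
  rw [he1, hf1] at p
  have : ‖e - f‖ * ‖e - f‖ ≤ 0 := by nlinarith
  exact sub_eq_zero.1 (norm_le_zero_iff.1 (by nlinarith [norm_nonneg (e - f)]))

/-- The pointwise argument. -/
lemma aux_point {E : Type*} [NormedAddCommGroup E] [InnerProductSpace ℝ E]
    (u : E → ℝ) (hu : ∀ x y, u x - u y ≤ ‖x - y‖) (M : Set E) (x y z : E)
    (hd : DifferentiableAt ℝ u x) (hx : x ∉ M) (hy : y ∈ M) (hz : z ∈ M)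
    (h1 : u x - u y = ‖x - y‖) (h2 : u x - u z = ‖x - z‖)
    (hN : ¬ ∃ y ∈ M, ∃ z, x ≠ y ∧ y ≠ z ∧ u x - u y = ‖x - y‖ ∧ u y - u z = ‖y - z‖) :
    y = z := by
  have hxy : x ≠ y := fun h => hx (h ▸ hy)
  have hxz : x ≠ z := fun h => hx (h ▸ hz)
  by_contra hyz
  have hs : SameRay ℝ (x - y) (x - z) :=
    (sameRay_iff_inv_norm_smul_eq_of_ne (sub_ne_zero.2 hxy) (sub_ne_zero.2 hxz)).2
      (aux_dir_unique u hu x y z hd hxy hxz h1 h2)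
  have hn := hs.norm_sub
  have e : x - y - (x - z) = z - y := by abel
  rw [e] at hn
  rcases le_total ‖x - y‖ ‖x - z‖ with hle | hle
  · apply hN
    refine ⟨y, hy, z, hxy, hyz, h1, ?_⟩
    rw [norm_sub_rev y z, hn, abs_of_nonpos (by linarith)]; linarith
  · apply hN
    refine ⟨z, hz, y, hxz, Ne.symm hyz, h2, ?_⟩
    rw [hn, abs_of_nonneg (by linarith)]; linarith

lemma aux_integrable {E : Type*} [NormedAddCommGroup E] [MeasurableSpace E] [BorelSpace E]
    [SecondCountableTopology E]
    (Ω : Set E) (hΩc : IsCompact Ω) (γ : Measure (E × E)) [IsFiniteMeasure γ]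
    (h1 : γ.map Prod.fst Ωᶜ = 0) (h2 : γ.map Prod.snd Ωᶜ = 0) :
    Integrable (fun p : E × E => ‖p.1 - p.2‖) γ := by
  obtain ⟨C, hC⟩ := hΩc.isBounded.exists_norm_le
  have a1 : ∀ᵐ p ∂γ, p.1 ∈ Ω := ae_of_ae_map (f := Prod.fst) measurable_fst.aemeasurable h1
  have a2 : ∀ᵐ p ∂γ, p.2 ∈ Ω := ae_of_ae_map (f := Prod.snd) measurable_snd.aemeasurable h2
  refine Integrable.of_bound (C := C + C) ?_ ?_
  · exact (continuous_fst.sub continuous_snd).norm.aestronglyMeasurable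
  · filter_upwards [a1, a2] with p b1 b2
    rw [norm_norm]
    exact (norm_sub_le _ _).trans (add_le_add (hC _ b1) (hC _ b2))

/-- The support of an optimal plan is cyclically monotone. -/
lemma aux_cyc {E : Type*} [NormedAddCommGroup E] [MeasurableSpace E] [BorelSpace E]
    [SecondCountableTopology E]
    (Ω : Set E) (hΩc : IsCompact Ω) (μ ν : Measure E) (hμΩ : μ Ωᶜ = 0) (hνΩ : ν Ωᶜ = 0)
    (γ : Measure (E × E)) [IsProbabilityMeasure γ]
    (hγ1 : γ.map Prod.fst = μ) (hγ2 : γ.map Prod.snd = ν)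
    (hopt : ∀ γ' : Measure (E × E), IsProbabilityMeasure γ' → γ'.map Prod.fst = μ →
      γ'.map Prod.snd = ν → ∫ p, ‖p.1 - p.2‖ ∂γ ≤ ∫ p, ‖p.1 - p.2‖ ∂γ')
    {ι : Type*} [Fintype ι] [Nonempty ι] (p : ι → E × E) (hp : ∀ i, p i ∈ γ.support)
    (σ : Equiv.Perm ι) :
    ∑ i, ‖(p i).1 - (p i).2‖ ≤ ∑ i, ‖(p i).1 - (p (σ i)).2‖ := by
  classical
  refine le_of_forall_pos_le_add fun ε hε => ?_
  have hcard : (0 : ℝ) < Fintype.card ι := by exact_mod_cast Fintype.card_pos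
  set δ : ℝ := ε / (4 * Fintype.card ι) with hδ
  have hδ0 : 0 < δ := by positivity
  let B : ι → Set (E × E) := fun i => Metric.ball (p i) δ
  have hBm : ∀ i, MeasurableSet (B i) := fun i => Metric.isOpen_ball.measurableSet
  have hB : ∀ i, γ (B i) ≠ 0 := fun i =>
    ((Measure.mem_support_iff_forall _).1 (hp i) _ (Metric.ball_mem_nhds _ hδ0)).ne'
  let g : ι → Measure (E × E) := fun i => ProbabilityTheory.cond γ (B i)
  have hg : ∀ i, IsProbabilityMeasure (g i) := fun i =>
    ProbabilityTheory.cond_isProbabilityMeasure (hB i)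
  have hgB : ∀ i, ∀ᵐ q ∂(g i), q ∈ B i := fun i => ProbabilityTheory.ae_cond_mem (hBm i)
  let s : ENNReal := ∑ i, (γ (B i))⁻¹
  have hs1 : s ≠ ⊤ := by
    simp only [s, ne_eq, ENNReal.sum_eq_top, not_exists, not_and]
    intro i _
    simpa using hB i
  have hs0 : s ≠ 0 := by
    simp only [s, ne_eq, Finset.sum_eq_zero_iff, not_forall]
    obtain ⟨i⟩ := (inferInstance : Nonempty ι)
    exact ⟨i, Finset.mem_univ _, by simp⟩
  let c : ENNReal := s⁻¹
  have hc1 : c ≠ ⊤ := by simpa [c] using hs0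
  have hc0 : c ≠ 0 := by simpa [c] using hs1
  let ρ : Measure (E × E) := ∑ i, c • g i
  have hgle : ∀ i, g i ≤ (γ (B i))⁻¹ • γ := by
    intro i
    simp only [g, ProbabilityTheory.cond]
    intro t
    simp only [Measure.smul_apply, smul_eq_mul]
    gcongr
    exact Measure.restrict_le_self
  have hρ : ρ ≤ γ := by
    intro t
    simp only [ρ, Measure.finsetSum_apply, Measure.smul_apply, smul_eq_mul]
    calc ∑ i, c * g i t ≤ ∑ i, c * ((γ (B i))⁻¹ * γ t) := by
          gcongr with i
          exact hgle i t
      _ = c * s * γ t := by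
          simp only [s, Finset.mul_sum, Finset.sum_mul, mul_assoc]
      _ = γ t := by
          rw [ENNReal.inv_mul_cancel hs0 hs1, one_mul]
  have : IsFiniteMeasure ρ := ⟨(hρ univ).trans_lt (measure_lt_top _ _)⟩
  let κ : Measure (E × E) := γ - ρ
  have hκ : κ + ρ = γ := Measure.sub_add_cancel_of_le hρ
  let q : ι → Measure (E × E) := fun i => ((g i).map Prod.fst).prod ((g (σ i)).map Prod.snd)
  have hm1 : ∀ i, IsProbabilityMeasure ((g i).map Prod.fst) := fun i =>
    Measure.isProbabilityMeasure_map measurable_fst.aemeasurable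
  have hm2 : ∀ i, IsProbabilityMeasure ((g i).map Prod.snd) := fun i =>
    Measure.isProbabilityMeasure_map measurable_snd.aemeasurable
  have hq : ∀ i, IsProbabilityMeasure (q i) := fun i => by
    simp only [q]; infer_instance
  let τ : Measure (E × E) := ∑ i, c • q i
  have hτ1 : τ.map Prod.fst = ρ.map Prod.fst := by
    simp only [τ, ρ]
    rw [Measure.map_finset_sum measurable_fst.aemeasurable,
      Measure.map_finset_sum measurable_fst.aemeasurable]
    refine Finset.sum_congr rfl fun i _ => ?_
    simp only [Measure.map_smul, q, Measure.map_fst_prod, measure_univ, one_smul]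
  have hτ2 : τ.map Prod.snd = ρ.map Prod.snd := by
    simp only [τ, ρ]
    rw [Measure.map_finset_sum measurable_snd.aemeasurable,
      Measure.map_finset_sum measurable_snd.aemeasurable]
    simp only [Measure.map_smul, q, Measure.map_snd_prod, measure_univ, one_smul]
    exact Equiv.sum_comp σ (fun i => c • (g i).map Prod.snd)
  let γ' := κ + τ
  have hγ'1 : γ'.map Prod.fst = μ := by
    rw [← hγ1, ← hκ, Measure.map_add _ _ measurable_fst, Measure.map_add _ _ measurable_fst, hτ1]
  have hγ'2 : γ'.map Prod.snd = ν := by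
    rw [← hγ2, ← hκ, Measure.map_add _ _ measurable_snd, Measure.map_add _ _ measurable_snd, hτ2]
  have hμp : IsProbabilityMeasure μ := by
    rw [← hγ1]; exact Measure.isProbabilityMeasure_map measurable_fst.aemeasurable
  have hγ'p : IsProbabilityMeasure γ' := by
    constructor
    have := hμp.measure_univ
    rw [← hγ'1, Measure.map_apply measurable_fst MeasurableSet.univ] at this
    simpa using this
  have hle := hopt γ' hγ'p hγ'1 hγ'2
  let f : E × E → ℝ := fun p => ‖p.1 - p.2‖
  have hI : Integrable f γ := aux_integrable Ω hΩc γ (hγ1 ▸ hμΩ) (hγ2 ▸ hνΩ)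
  have hI' : Integrable f γ' := aux_integrable Ω hΩc γ' (hγ'1 ▸ hμΩ) (hγ'2 ▸ hνΩ)
  have hIκ : Integrable f κ := hI.mono_measure (hκ ▸ Measure.le_add_right le_rfl)
  have hIρ : Integrable f ρ := hI.mono_measure hρ
  have hIτ : Integrable f τ := hI'.mono_measure (Measure.le_add_left le_rfl)
  have hle2 : ∫ x, f x ∂ρ ≤ ∫ x, f x ∂τ := by
    have e1 : ∫ x, f x ∂γ = ∫ x, f x ∂κ + ∫ x, f x ∂ρ := by
      rw [← integral_add_measure hIκ hIρ, hκ]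
    have e2 : ∫ x, f x ∂γ' = ∫ x, f x ∂κ + ∫ x, f x ∂τ := integral_add_measure hIκ hIτ
    change ∫ x, f x ∂γ ≤ ∫ x, f x ∂γ' at hle
    linarith
  have hIg : ∀ i, Integrable f (c • g i) := fun i =>
    (integrable_finsetSum_measure.1 hIρ) i (Finset.mem_univ _)
  have hIq : ∀ i, Integrable f (c • q i) := fun i =>
    (integrable_finsetSum_measure.1 hIτ) i (Finset.mem_univ _)
  have hIg' : ∀ i, Integrable f (g i) := fun i => (integrable_smul_measure hc0 hc1).1 (hIg i)
  have hIq' : ∀ i, Integrable f (q i) := fun i => (integrable_smul_measure hc0 hc1).1 (hIq i)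
  simp only [ρ, τ] at hle2
  rw [integral_finsetSum_measure (fun i _ => hIg i),
    integral_finsetSum_measure (fun i _ => hIq i)] at hle2
  simp only [integral_smul_measure, smul_eq_mul, ← Finset.mul_sum] at hle2
  have hle3 := le_of_mul_le_mul_left hle2 (ENNReal.toReal_pos hc0 hc1)
  have low : ∀ i, ‖(p i).1 - (p i).2‖ - 2 * δ ≤ ∫ x, f x ∂(g i) := by
    intro i
    have : ∫ x, (‖(p i).1 - (p i).2‖ - 2 * δ) ∂(g i) ≤ ∫ x, f x ∂(g i) := by
      refine integral_mono_ae (integrable_const _) (hIg' i) ?_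
      filter_upwards [hgB i] with x hx
      have hx' : dist x (p i) < δ := hx
      have b1 : ‖x.1 - (p i).1‖ < δ := by
        rw [← dist_eq_norm]; exact (le_max_left _ _).trans_lt hx'
      have b2 : ‖x.2 - (p i).2‖ < δ := by
        rw [← dist_eq_norm]; exact (le_max_right _ _).trans_lt hx'
      have e : (p i).1 - (p i).2 = (x.1 - x.2) - (x.1 - (p i).1) + (x.2 - (p i).2) := by abel
      have := norm_add_le ((x.1 - x.2) - (x.1 - (p i).1)) (x.2 - (p i).2)
      have h3 := norm_sub_le (x.1 - x.2) (x.1 - (p i).1)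
      rw [e]
      simp only [f]
      linarith
    simpa using this
  have upp : ∀ i, ∫ x, f x ∂(q i) ≤ ‖(p i).1 - (p (σ i)).2‖ + 2 * δ := by
    intro i
    have : ∫ x, f x ∂(q i) ≤ ∫ x, (‖(p i).1 - (p (σ i)).2‖ + 2 * δ) ∂(q i) := by
      refine integral_mono_ae (hIq' i) (integrable_const _) ?_
      have c1 : ∀ᵐ x ∂(q i), ‖x.1 - (p i).1‖ < δ := by
        have h0 : ∀ᵐ y ∂((g i).map Prod.fst), ‖y - (p i).1‖ < δ := by
          rw [ae_map_iff measurable_fst.aemeasurable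
            (measurableSet_lt (by fun_prop) measurable_const)]
          filter_upwards [hgB i] with x hx
          have hx' : dist x (p i) < δ := hx
          rw [← dist_eq_norm]; exact (le_max_left _ _).trans_lt hx'
        exact Measure.quasiMeasurePreserving_fst.ae h0
      have c2 : ∀ᵐ x ∂(q i), ‖x.2 - (p (σ i)).2‖ < δ := by
        have h0 : ∀ᵐ y ∂((g (σ i)).map Prod.snd), ‖y - (p (σ i)).2‖ < δ := by
          rw [ae_map_iff measurable_snd.aemeasurable
            (measurableSet_lt (by fun_prop) measurable_const)]
          filter_upwards [hgB (σ i)] with x hx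
          have hx' : dist x (p (σ i)) < δ := hx
          rw [← dist_eq_norm]; exact (le_max_right _ _).trans_lt hx'
        exact Measure.quasiMeasurePreserving_snd.ae h0
      filter_upwards [c1, c2] with x b1 b2
      have e : x.1 - x.2 = ((p i).1 - (p (σ i)).2) + (x.1 - (p i).1) - (x.2 - (p (σ i)).2) := by
        abel
      have := norm_sub_le (((p i).1 - (p (σ i)).2) + (x.1 - (p i).1)) (x.2 - (p (σ i)).2)
      have h3 := norm_add_le ((p i).1 - (p (σ i)).2) (x.1 - (p i).1)
      simp only [f]
      rw [e]
      linarith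
    simpa using this
  have s1 := Finset.sum_le_sum (fun i (_ : i ∈ Finset.univ) => low i)
  have s2 := Finset.sum_le_sum (fun i (_ : i ∈ Finset.univ) => upp i)
  rw [Finset.sum_sub_distrib] at s1
  rw [Finset.sum_add_distrib] at s2
  simp only [Finset.sum_const, Finset.card_univ, nsmul_eq_mul] at s1 s2
  have : (Fintype.card ι : ℝ) * (2 * δ) = ε / 2 := by
    rw [hδ]; field_simp; norm_num
  linarith

/-- Existence of a Kantorovich potential for a cyclically monotone set. -/
lemma aux_potential {E : Type*} [NormedAddCommGroup E] (S : Set (E × E)) (hS : S.Nonempty)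
    (hcyc : ∀ (n : ℕ) (p : Fin (n + 1) → E × E) (_ : ∀ i, p i ∈ S)
      (σ : Equiv.Perm (Fin (n + 1))),
      ∑ i, ‖(p i).1 - (p i).2‖ ≤ ∑ i, ‖(p i).1 - (p (σ i)).2‖) :
    ∃ u : E → ℝ, (∀ x y, u x - u y ≤ ‖x - y‖) ∧
      ∀ x y, (x, y) ∈ S → u x - u y = ‖x - y‖ := by
  classical
  -- cost of a chain, ending at `z`
  let cost : ℕ → (ℕ → E × E) → E → ℝ := fun n p z =>
    ∑ i ∈ Finset.range n, ‖(p (i + 1)).1 - (p i).2‖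
      - ∑ i ∈ Finset.range (n + 1), ‖(p i).1 - (p i).2‖ + ‖z - (p n).2‖
  have hcost0 : ∀ n (p : ℕ → E × E), (∀ i, p i ∈ S) → 0 ≤ cost n p (p 0).1 := by
    intro n p hp
    have h := hcyc n (fun i => p i) (fun i => hp i) (finRotate (n + 1)).symm
    have h2 : ∑ i : Fin (n + 1), ‖(p i).1 - (p ((finRotate (n + 1)).symm i : Fin (n + 1))).2‖ =
        ∑ i ∈ Finset.range n, ‖(p (i + 1)).1 - (p i).2‖ + ‖(p 0).1 - (p n).2‖ := by
      rw [← Equiv.sum_comp (finRotate (n + 1))]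
      simp only [Equiv.symm_apply_apply]
      rw [Fin.sum_univ_castSucc, Finset.sum_range]
      congr 1
      · refine Finset.sum_congr rfl fun i _ => ?_
        simp
      · simp
    rw [h2] at h
    rw [Fin.sum_univ_eq_sum_range (fun i => ‖(p i).1 - (p i).2‖)] at h
    simp only [cost]
    linarith
  have hcostlip : ∀ n p x y, cost n p x - cost n p y ≤ ‖x - y‖ := by
    intro n p x y
    simp only [cost]
    have := norm_sub_le_norm_sub_add_norm_sub x y (p n).2
    linarith
  obtain ⟨a, ha⟩ := hS
  let V : E → Set ℝ := fun z => {c | ∃ n p, (∀ i, p i ∈ S) ∧ p 0 = a ∧ c = cost n p z}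
  have hne : ∀ z, (V z).Nonempty := fun z => ⟨_, 0, fun _ => a, fun _ => ha, rfl, rfl⟩
  have hbd : ∀ z, BddBelow (V z) := by
    intro z
    refine ⟨-‖a.1 - z‖, ?_⟩
    rintro c ⟨n, p, hp, hp0, rfl⟩
    have h1 := hcost0 n p hp
    rw [hp0] at h1
    have := hcostlip n p a.1 z
    linarith
  let u : E → ℝ := fun z => sInf (V z)
  have hlip : ∀ x y, u x - u y ≤ ‖x - y‖ := by
    intro x y
    have : u x - ‖x - y‖ ≤ u y := by
      refine le_csInf (hne y) ?_
      rintro c ⟨n, p, hp, hp0, rfl⟩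
      have h1 : u x ≤ cost n p x := csInf_le (hbd x) ⟨n, p, hp, hp0, rfl⟩
      have := hcostlip n p x y
      linarith
    linarith
  refine ⟨u, hlip, fun x y hxy => le_antisymm (hlip x y) ?_⟩
  have : u y + ‖x - y‖ ≤ u x := by
    refine le_csInf (hne x) ?_
    rintro c ⟨n, p, hp, hp0, rfl⟩
    let p' : ℕ → E × E := fun i => if i ≤ n then p i else (x, y)
    have h1 : u y ≤ cost (n + 1) p' y := by
      refine csInf_le (hbd y) ⟨n + 1, p', ?_, ?_, rfl⟩
      · intro i
        simp only [p']
        split_ifs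
        · exact hp i
        · exact hxy
      · simp [p', hp0]
    have h2 : cost (n + 1) p' y = cost n p x - ‖x - y‖ := by
      simp only [cost]
      rw [Finset.sum_range_succ, Finset.sum_range_succ _ (n + 1)]
      have e1 : ∑ i ∈ Finset.range n, ‖(p' (i + 1)).1 - (p' i).2‖ =
          ∑ i ∈ Finset.range n, ‖(p (i + 1)).1 - (p i).2‖ := by
        refine Finset.sum_congr rfl fun i hi => ?_
        have := Finset.mem_range.1 hi
        simp only [p']
        rw [if_pos (by omega), if_pos (by omega)]
      have e2 : ∑ i ∈ Finset.range (n + 1), ‖(p' i).1 - (p' i).2‖ =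
          ∑ i ∈ Finset.range (n + 1), ‖(p i).1 - (p i).2‖ := by
        refine Finset.sum_congr rfl fun i hi => ?_
        have := Finset.mem_range.1 hi
        simp only [p']
        rw [if_pos (by omega)]
      have e3 : p' (n + 1) = (x, y) := by simp [p']
      have e4 : p' n = p n := by simp [p']
      rw [e1, e2, e3, e4]
      simp only [sub_self, norm_zero]
      ring
    linarith
  linarith

lemma aux_plan {d : ℕ} {Ω : Set (EuclideanSpace ℝ (Fin d))}
    {μ ν : Measure (EuclideanSpace ℝ (Fin d))} [IsProbabilityMeasure μ]
    {T : EuclideanSpace ℝ (Fin d) → EuclideanSpace ℝ (Fin d)} (hT : IsOptimalMap Ω μ ν T) :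
    IsProbabilityMeasure (μ.map fun x => (x, T x)) ∧
    (μ.map fun x => (x, T x)).map Prod.fst = μ ∧ (μ.map fun x => (x, T x)).map Prod.snd = ν ∧
    ∫ p, ‖p.1 - p.2‖ ∂(μ.map fun x => (x, T x)) = W1 μ ν := by
  obtain ⟨hm, -, hν, hc⟩ := hT
  have hg : Measurable fun x => (x, T x) := measurable_id.prodMk hm
  refine ⟨Measure.isProbabilityMeasure_map hg.aemeasurable, ?_, ?_, ?_⟩
  · rw [Measure.map_map measurable_fst hg]
    exact Measure.map_id
  · rw [Measure.map_map measurable_snd hg]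
    exact hν
  · have hcont : Continuous fun p : EuclideanSpace ℝ (Fin d) × EuclideanSpace ℝ (Fin d) =>
        ‖p.1 - p.2‖ := by fun_prop
    rw [integral_map hg.aemeasurable hcont.aestronglyMeasurable]
    exact hc

theorem stmt11 {d : ℕ} (hd : 1 ≤ d) (Ω : Set (EuclideanSpace ℝ (Fin d)))
    (hΩc : IsCompact Ω) (hΩv : Convex ℝ Ω)
    (μ ν : Measure (EuclideanSpace ℝ (Fin d)))
    [IsProbabilityMeasure μ] [IsProbabilityMeasure ν]
    (hμΩ : μ Ωᶜ = 0) (hνΩ : ν Ωᶜ = 0) (hac : μ ≪ volume)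
    (m : ℕ) (hm : m + 2 ≤ d) (M : Set (EuclideanSpace ℝ (Fin d)))
    (hM : IsC1Submanifold m M) (hspt : mSupport ν ⊆ M)
    (T0 T1 : EuclideanSpace ℝ (Fin d) → EuclideanSpace ℝ (Fin d))
    (hT0 : IsOptimalMap Ω μ ν T0) (hT1 : IsOptimalMap Ω μ ν T1) :
    ∀ᵐ x ∂μ, T0 x = T1 x := by
  obtain ⟨hp0, hf0, hs0, hc0⟩ := aux_plan hT0
  obtain ⟨hp1, hf1, hs1, hc1⟩ := aux_plan hT1
  have hg0 : Measurable fun x => (x, T0 x) := measurable_id.prodMk hT0.1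
  have hg1 : Measurable fun x => (x, T1 x) := measurable_id.prodMk hT1.1
  set γ0 := μ.map fun x => (x, T0 x) with hγ0
  set γ1 := μ.map fun x => (x, T1 x) with hγ1
  have hhalf : (2⁻¹ : ENNReal) + 2⁻¹ = 1 := ENNReal.inv_two_add_inv_two
  let γ : Measure (EuclideanSpace ℝ (Fin d) × EuclideanSpace ℝ (Fin d)) :=
    (2⁻¹ : ENNReal) • γ0 + (2⁻¹ : ENNReal) • γ1
  have hγp : IsProbabilityMeasure γ := by
    constructor
    simp [γ, hhalf]
  have hγf : γ.map Prod.fst = μ := by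
    rw [Measure.map_add _ _ measurable_fst, Measure.map_smul, Measure.map_smul, hf0, hf1,
      ← add_smul, hhalf, one_smul]
  have hγs : γ.map Prod.snd = ν := by
    rw [Measure.map_add _ _ measurable_snd, Measure.map_smul, Measure.map_smul, hs0, hs1,
      ← add_smul, hhalf, one_smul]
  have hI0 := aux_integrable Ω hΩc γ0 (by rw [hf0]; exact hμΩ) (by rw [hs0]; exact hνΩ)
  have hI1 := aux_integrable Ω hΩc γ1 (by rw [hf1]; exact hμΩ) (by rw [hs1]; exact hνΩ)
  have h2 : (2⁻¹ : ENNReal) ≠ ⊤ := by simp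
  have h20 : (2⁻¹ : ENNReal) ≠ 0 := by simp
  have hγc : ∫ p, ‖p.1 - p.2‖ ∂γ = W1 μ ν := by
    rw [integral_add_measure (hI0.smul_measure h2) (hI1.smul_measure h2),
      integral_smul_measure, integral_smul_measure, hc0, hc1, ← add_smul,
      ← ENNReal.toReal_add h2 h2, hhalf]
    simp
  have hopt : ∀ γ' : Measure (EuclideanSpace ℝ (Fin d) × EuclideanSpace ℝ (Fin d)),
      IsProbabilityMeasure γ' → γ'.map Prod.fst = μ →
      γ'.map Prod.snd = ν → ∫ p, ‖p.1 - p.2‖ ∂γ ≤ ∫ p, ‖p.1 - p.2‖ ∂γ' := by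
    intro γ' h1 h2 h3
    rw [hγc]
    refine csInf_le ⟨0, ?_⟩ ⟨γ', h1, h2, h3, rfl⟩
    rintro c ⟨η, -, -, -, rfl⟩
    exact integral_nonneg fun _ => norm_nonneg _
  obtain ⟨u, hu, huS⟩ := aux_potential γ.support
    (Measure.nonempty_support (IsProbabilityMeasure.ne_zero γ))
    (fun n p hp σ => aux_cyc Ω hΩc μ ν hμΩ hνΩ γ hγf hγs hopt p hp σ)
  have hS : ∀ᵐ p ∂γ, p ∈ γ.support := Measure.support_mem_ae
  have hS' : (∀ᵐ p ∂γ0, p ∈ γ.support) ∧ ∀ᵐ p ∂γ1, p ∈ γ.support := by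
    rw [ae_add_measure_iff, Measure.ae_ennreal_smul_measure_iff h20,
      Measure.ae_ennreal_smul_measure_iff h20] at hS
    exact hS
  have hA0 : ∀ᵐ x ∂μ, u x - u (T0 x) = ‖x - T0 x‖ := by
    filter_upwards [ae_of_ae_map hg0.aemeasurable hS'.1] with x hx using huS _ _ hx
  have hA1 : ∀ᵐ x ∂μ, u x - u (T1 x) = ‖x - T1 x‖ := by
    filter_upwards [ae_of_ae_map hg1.aemeasurable hS'.2] with x hx using huS _ _ hx
  have hνM : ∀ᵐ y ∂ν, y ∈ M := by
    have : ∀ᵐ y ∂ν, y ∈ ν.support := Measure.support_mem_ae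
    filter_upwards [this] with y hy
    refine hspt fun U hU hyU => ?_
    exact (Measure.mem_support_iff_forall _).1 hy U (hU.mem_nhds hyU)
  have hM0 : ∀ᵐ x ∂μ, T0 x ∈ M :=
    ae_of_ae_map hT0.1.aemeasurable (by rw [hT0.2.2.1]; exact hνM)
  have hM1 : ∀ᵐ x ∂μ, T1 x ∈ M :=
    ae_of_ae_map hT1.1.aemeasurable (by rw [hT1.2.2.1]; exact hνM)
  obtain ⟨U, φ, hUM, hU⟩ := hM
  choose hUsub hCD hinj K ψ hψ hψφ using hU
  have hcov : M ⊆ ⋃ i, ψ i '' (φ i '' U i) := by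
    intro x hx
    obtain ⟨i, hi⟩ := mem_iUnion.1 (hUM hx)
    exact mem_iUnion.2 ⟨i, φ i x, ⟨x, hi, rfl⟩, hψφ i x hi⟩
  have hN := aux_null_rays hm u hu M (fun i => φ i '' U i) K ψ hψ hcov
  have hNM := aux_null_M hm M (fun i => φ i '' U i) K ψ hψ hcov
  have hlip : LipschitzWith 1 u := by
    apply LipschitzWith.of_dist_le_mul
    intro a b
    rw [Real.dist_eq, NNReal.coe_one, one_mul, dist_eq_norm]
    have := hu a b
    have h' := hu b a
    rw [norm_sub_rev] at h'
    rw [abs_le]; constructor <;> linarith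
  have hD : ∀ᵐ x ∂μ, DifferentiableAt ℝ u x := hac.ae_le hlip.ae_differentiableAt
  have hN' := measure_eq_zero_iff_ae_notMem.1 (hac hN)
  have hNM' := measure_eq_zero_iff_ae_notMem.1 (hac hNM)
  filter_upwards [hA0, hA1, hM0, hM1, hD, hN', hNM'] with x a0 a1 m0 m1 dx nx mx
  exact aux_point u hu M x _ _ dx mx m0 m1 a0 a1 nx
end
end
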